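/- arXiv:1406.2988 — 3 statements merged into one kernel-verified Lean document; each statement's English description precedes it below -/
import Mathlib

section
/- (Stanley) For every natural number n ≥ 1, the integer sequence c_k := p_k(n,n) − b_k(n), 0 ≤ k ≤ n², is symmetric and unimodal; precisely: c_k = c_{n²−k} for all 0 ≤ k ≤ n², and c_{k−1} ≤ c_k for all k with 1 ≤ k and 2k ≤ n². Equivalently, the polynomial binom(2n,n)_q − ∏_{i=1}^n (1+q^{2i−1}) has a symmetric unimodal sequence of coefficients. -/
/-- `rectPartitions k l m` is the number of integer partitions of `k` fitting in an
`l × m` rectangle: at most `l` parts, each part at most `m`. -/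
noncomputable def rectPartitions (k l m : ℕ) : ℕ :=
  Nat.card {π : Nat.Partition k // Multiset.card π.parts ≤ l ∧ ∀ i ∈ π.parts, i ≤ m}

/-- `distinctOddPartitions k n` is the number of partitions of `k` into distinct odd
parts, each part at most `2n - 1`. -/
noncomputable def distinctOddPartitions (k n : ℕ) : ℕ :=
  Nat.card {π : Nat.Partition k // π.parts.Nodup ∧ ∀ i ∈ π.parts, Odd i ∧ i ≤ 2 * n - 1}


namespace Stan
open Finset

/-! ### Part 1: abstract linear algebra -/

theorem card_split {α : Type*} [Fintype α] [DecidableEq α] (τ : α → α) (hτ : ∀ a, τ (τ a) = a)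
    (e : α → ℕ) (he : Function.Injective e) (A : Finset α) (hA : ∀ a ∈ A, τ a ∈ A) :
    A.card = 2 * (A.filter (fun a => e a < e (τ a))).card + (A.filter (fun a => τ a = a)).card := by
  have h1 := Finset.card_filter_add_card_filter_not (s := A) (fun a => τ a = a)
  have h2 := Finset.card_filter_add_card_filter_not (s := A.filter (fun a => ¬ τ a = a))
    (fun a => e a < e (τ a))
  have h3 : (A.filter (fun a => ¬ τ a = a)).filter (fun a => e a < e (τ a))
      = A.filter (fun a => e a < e (τ a)) := by
    ext a
    simp only [mem_filter]
    constructor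
    · rintro ⟨⟨h, _⟩, h'⟩; exact ⟨h, h'⟩
    · rintro ⟨h, h'⟩
      refine ⟨⟨h, ?_⟩, h'⟩
      intro h''
      rw [h''] at h'
      exact lt_irrefl _ h'
  have h4 : ((A.filter (fun a => ¬ τ a = a)).filter (fun a => ¬ e a < e (τ a))).card
      = (A.filter (fun a => e a < e (τ a))).card := by
    apply Finset.card_bij' (fun a _ => τ a) (fun a _ => τ a)
    · intro a ha
      simp only [mem_filter] at ha ⊢
      refine ⟨hA _ ha.1.1, ?_⟩
      rw [hτ]
      rcases lt_trichotomy (e a) (e (τ a)) with h | h | h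
      · exact absurd h ha.2
      · exact absurd (he h).symm ha.1.2
      · exact h
    · intro a ha
      simp only [mem_filter] at ha ⊢
      refine ⟨⟨hA _ ha.1, ?_⟩, ?_⟩
      · rw [hτ]; intro h; rw [← h] at ha; exact lt_irrefl _ ha.2
      · rw [hτ]; exact not_lt.2 ha.2.le
    · intro a _; exact hτ a
    · intro a _; exact hτ a
  rw [h3, h4] at h2
  omega

theorem anti_le {α : Type*} [Fintype α] [DecidableEq α] (τ : α → α) (hτ : ∀ a, τ (τ a) = a)
    (U : (α → ℝ) →ₗ[ℝ] (α → ℝ)) (hU : ∀ x, U (x ∘ τ) = (U x) ∘ τ)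
    (A B : Finset α) (hA : ∀ a ∈ A, τ a ∈ A) (hB : ∀ a ∈ B, τ a ∈ B)
    (hAB : ∀ x : α → ℝ, (∀ a, a ∉ A → x a = 0) → ∀ b, b ∉ B → U x b = 0)
    (hinj : ∀ x : α → ℝ, (∀ a, a ∉ A → x a = 0) → U x = 0 → x = 0) :
    (A.card : ℤ) - ((A.filter (fun a => τ a = a)).card : ℤ)
      ≤ (B.card : ℤ) - ((B.filter (fun a => τ a = a)).card : ℤ) := by
  classical
  obtain ⟨e, he⟩ : ∃ e : α → ℕ, Function.Injective e :=
    ⟨fun a => (Fintype.equivFin α a : ℕ), fun a b h =>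
      (Fintype.equivFin α).injective (Fin.ext h)⟩
  have cA := card_split τ hτ e he A hA
  have cB := card_split τ hτ e he B hB
  suffices h : (A.filter (fun a => e a < e (τ a))).card ≤ (B.filter (fun a => e a < e (τ a))).card by
    omega
  set PA := A.filter (fun a => e a < e (τ a)) with hPA
  set PB := B.filter (fun a => e a < e (τ a)) with hPB
  let E : (PA → ℝ) →ₗ[ℝ] (α → ℝ) :=
    { toFun := fun f a => (if h : a ∈ PA then f ⟨a, h⟩ else 0)
        - (if h : τ a ∈ PA then f ⟨τ a, h⟩ else 0)
      map_add' := by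
        intro f g; ext a; simp only [Pi.add_apply]; split_ifs <;> ring
      map_smul' := by
        intro c f; ext a; simp only [Pi.smul_apply, smul_eq_mul, RingHom.id_apply]
        split_ifs <;> ring }
  have hE : ∀ f a, E f a = (if h : a ∈ PA then f ⟨a, h⟩ else 0)
        - (if h : τ a ∈ PA then f ⟨τ a, h⟩ else 0) := fun f a => rfl
  have hEanti : ∀ f, (E f) ∘ τ = - E f := by
    intro f; ext a
    simp only [Function.comp, Pi.neg_apply, hE, hτ]; ring
  have hEsupp : ∀ f a, a ∉ A → E f a = 0 := by
    intro f a ha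
    have h1 : a ∉ PA := fun h => ha (mem_filter.1 h).1
    have h2 : τ a ∉ PA := fun h => ha (by have := hA _ (mem_filter.1 h).1; rwa [hτ] at this)
    rw [hE, dif_neg h1, dif_neg h2]; ring
  have hEval : ∀ f (p : PA), E f p = f p := by
    intro f p
    have h1 := (mem_filter.1 p.2).2
    have h2 : τ p ∉ PA := fun h => by
      have := (mem_filter.1 h).2
      rw [hτ] at this
      exact lt_asymm h1 this
    rw [hE, dif_pos p.2, dif_neg h2]; simp
  let R : (α → ℝ) →ₗ[ℝ] (PB → ℝ) := LinearMap.funLeft ℝ ℝ (fun p : PB => (p : α))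
  have hR : ∀ x (p : PB), R x p = x p := fun x p => rfl
  have key : Function.Injective (R ∘ₗ U ∘ₗ E) := by
    rw [← LinearMap.ker_eq_bot, LinearMap.ker_eq_bot']
    intro f hf
    have h0 : ∀ p ∈ PB, U (E f) p = 0 := by
      intro p hp
      have := congrFun hf ⟨p, hp⟩
      simpa [hR] using this
    have hanti : ∀ a, U (E f) (τ a) = - U (E f) a := by
      intro a
      have := congrFun (hU (E f)) a
      rw [hEanti, map_neg] at this
      simpa using this.symm
    have hz : U (E f) = 0 := by
      ext a
      by_cases ha : a ∈ B
      · rcases lt_trichotomy (e a) (e (τ a)) with h | h | h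
        · exact h0 a (mem_filter.2 ⟨ha, h⟩)
        · have h1 := hanti a
          rw [← he h] at h1
          simp only [Pi.zero_apply]; linarith
        · have h1 := h0 (τ a) (mem_filter.2 ⟨hB _ ha, by rwa [hτ]⟩)
          rw [hanti] at h1
          simp only [Pi.zero_apply]; linarith
      · exact hAB _ (hEsupp f) a ha
    have hz' := hinj _ (hEsupp f) hz
    ext p
    rw [← hEval f p, hz']; rfl
  have := LinearMap.finrank_le_finrank_of_injective key
  simpa using this

/-! ### Part 2: the raising operator -/

/-- number of occupied sites -/
def cd {t : ℕ} (S : Fin t → Bool) : ℕ := ∑ i, if S i = true then 1 else 0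
/-- sum of occupied sites -/
def wt {t : ℕ} (S : Fin t → Bool) : ℕ := ∑ i, if S i = true then (i : ℕ) else 0

/-- exchange neighbours -/
def sw {M : ℕ} (i : Fin M) (S : Fin (M+1) → Bool) : Fin (M+1) → Bool :=
  fun j => S (Equiv.swap i.castSucc i.succ j)

theorem sw_sw {M : ℕ} (i : Fin M) (S : Fin (M+1) → Bool) : sw i (sw i S) = S := by
  ext j; simp [sw]

theorem cs_ne {M : ℕ} (i : Fin M) : i.castSucc ≠ i.succ := by
  intro h; simp [Fin.ext_iff] at h

theorem sw_cs {M : ℕ} (i : Fin M) (S : Fin (M+1) → Bool) : sw i S i.castSucc = S i.succ := by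
  simp [sw]
theorem sw_su {M : ℕ} (i : Fin M) (S : Fin (M+1) → Bool) : sw i S i.succ = S i.castSucc := by
  simp [sw]
theorem sw_of_ne {M : ℕ} (i : Fin M) (S : Fin (M+1) → Bool) (j : Fin (M+1))
    (h1 : j ≠ i.castSucc) (h2 : j ≠ i.succ) : sw i S j = S j := by
  simp [sw, Equiv.swap_apply_of_ne_of_ne h1 h2]

/-- `S` is obtained by a raising step at `i`. -/
def up {M : ℕ} (i : Fin M) (S : Fin (M+1) → Bool) : Prop :=
  S i.castSucc = false ∧ S i.succ = true
def dn {M : ℕ} (i : Fin M) (S : Fin (M+1) → Bool) : Prop :=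
  S i.castSucc = true ∧ S i.succ = false
instance {M : ℕ} (i : Fin M) (S : Fin (M+1) → Bool) : Decidable (up i S) :=
  inferInstanceAs (Decidable (_ ∧ _))
instance {M : ℕ} (i : Fin M) (S : Fin (M+1) → Bool) : Decidable (dn i S) :=
  inferInstanceAs (Decidable (_ ∧ _))

theorem up_sw {M : ℕ} (i : Fin M) (S : Fin (M+1) → Bool) : up i (sw i S) ↔ dn i S := by
  simp only [up, dn, sw_cs, sw_su]; tauto

def swE {M : ℕ} (i : Fin M) : (Fin (M+1) → Bool) ≃ (Fin (M+1) → Bool) :=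
  ⟨sw i, sw i, sw_sw i, sw_sw i⟩

theorem sw_comm {M : ℕ} (i j : Fin M) (h1 : (i:ℕ) + 1 < j) (S : Fin (M+1) → Bool) :
    sw i (sw j S) = sw j (sw i S) := by
  ext k
  by_cases a1 : k = i.castSucc
  · subst a1
    rw [sw_cs, sw_of_ne, sw_of_ne, sw_cs] <;> simp [Fin.ext_iff] <;> omega
  by_cases a2 : k = i.succ
  · subst a2
    rw [sw_su, sw_of_ne, sw_of_ne, sw_su] <;> simp [Fin.ext_iff] <;> omega
  by_cases a3 : k = j.castSucc
  · subst a3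
    rw [sw_of_ne i, sw_cs, sw_cs, sw_of_ne] <;> simp [Fin.ext_iff] <;> omega
  by_cases a4 : k = j.succ
  · subst a4
    rw [sw_of_ne i, sw_su, sw_su, sw_of_ne] <;> simp [Fin.ext_iff] <;> omega
  rw [sw_of_ne _ _ _ a1 a2, sw_of_ne _ _ _ a3 a4, sw_of_ne _ _ _ a3 a4, sw_of_ne _ _ _ a1 a2]

theorem up_sw_far {M : ℕ} (i j : Fin M) (h1 : (i:ℕ) + 1 < j ∨ (j:ℕ) + 1 < i)
    (S : Fin (M+1) → Bool) : up i (sw j S) ↔ up i S := by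
  unfold up
  rw [sw_of_ne, sw_of_ne] <;> simp [Fin.ext_iff] <;> omega

theorem cross_aux {M : ℕ} (x : (Fin (M+1) → Bool) → ℝ) (i j : Fin M) (h : (i:ℕ) < j) :
    ∑ S, (if up i S then x (sw i S) else 0) * (if up j S then x (sw j S) else 0)
    = ∑ S, (if dn i S then x (sw i S) else 0) * (if dn j S then x (sw j S) else 0) := by
  by_cases h' : (i:ℕ) + 1 < j
  · rw [← Equiv.sum_comp ((swE i).trans (swE j))]
    apply Finset.sum_congr rfl
    intro S _
    have e1 : ((swE i).trans (swE j)) S = sw j (sw i S) := rfl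
    rw [e1, sw_sw, ← sw_comm i j h', sw_sw]
    have e2 : up i (sw i (sw j S)) ↔ dn i S := by
      rw [sw_comm i j h', up_sw_far _ _ (Or.inl h'), up_sw]
    have e3 : up j (sw i (sw j S)) ↔ dn j S := by
      rw [up_sw_far _ _ (Or.inr h'), up_sw]
    simp only [e2, e3]
    ring_nf
    split_ifs <;> ring
  · have hj : j.castSucc = i.succ := by simp [Fin.ext_iff]; omega
    have z1 : ∀ S : Fin (M+1) → Bool, ¬ (up i S ∧ up j S) := by
      intro S ⟨a, b⟩
      have := a.2; have := b.1; simp_all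
    have z2 : ∀ S : Fin (M+1) → Bool, ¬ (dn i S ∧ dn j S) := by
      intro S ⟨a, b⟩
      have := a.2; have := b.1; simp_all
    apply Finset.sum_congr rfl
    intro S _
    have := z1 S; have := z2 S
    by_cases p1 : up i S <;> by_cases p2 : up j S <;> by_cases p3 : dn i S <;>
      by_cases p4 : dn j S <;> simp_all

theorem cross {M : ℕ} (x : (Fin (M+1) → Bool) → ℝ) (i j : Fin M) (h : i ≠ j) :
    ∑ S, (if up i S then x (sw i S) else 0) * (if up j S then x (sw j S) else 0)
    = ∑ S, (if dn i S then x (sw i S) else 0) * (if dn j S then x (sw j S) else 0) := by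
  rcases lt_or_gt_of_ne h with h | h
  · exact cross_aux x i j h
  · have := cross_aux x j i h
    simpa only [mul_comm] using this

theorem diag {M : ℕ} (x : (Fin (M+1) → Bool) → ℝ) (i : Fin M) :
    ∑ S, (if up i S then x (sw i S) else 0) * (if up i S then x (sw i S) else 0)
    = ∑ S, (if dn i S then x S ^ 2 else 0) := by
  rw [← Equiv.sum_comp (swE i)]
  apply Finset.sum_congr rfl
  intro S _
  have e1 : (swE i) S = sw i S := rfl
  rw [e1, sw_sw]
  simp only [up_sw]
  split_ifs <;> ring

theorem diag' {M : ℕ} (x : (Fin (M+1) → Bool) → ℝ) (i : Fin M) :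
    ∑ S, (if dn i S then x (sw i S) else 0) * (if dn i S then x (sw i S) else 0)
    = ∑ S, (if up i S then x S ^ 2 else 0) := by
  rw [← Equiv.sum_comp (swE i)]
  apply Finset.sum_congr rfl
  intro S _
  have e1 : (swE i) S = sw i S := rfl
  have e2 : dn i (sw i S) ↔ up i S := by rw [← up_sw, sw_sw]
  rw [e1, sw_sw]
  simp only [e2]
  split_ifs <;> ring

/-- weight of a raising step -/
noncomputable def w {M : ℕ} (i : Fin M) : ℝ := ((i:ℕ) + 1 : ℝ) * ((M:ℝ) - (i:ℕ))

theorem w_nonneg {M : ℕ} (i : Fin M) : 0 ≤ w i := by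
  unfold w
  have : ((i:ℕ):ℝ) ≤ M := by exact_mod_cast i.2.le
  have : (0:ℝ) ≤ M - (i:ℕ) := by linarith
  positivity

noncomputable def U (M : ℕ) : ((Fin (M+1) → Bool) → ℝ) →ₗ[ℝ] ((Fin (M+1) → Bool) → ℝ) where
  toFun x S := ∑ i : Fin M, √(w i) * (if up i S then x (sw i S) else 0)
  map_add' := by
    intro x y; ext S
    simp only [Pi.add_apply, ← Finset.sum_add_distrib]
    refine Finset.sum_congr rfl fun i _ => ?_
    split_ifs <;> ring
  map_smul' := by
    intro c x; ext S
    simp only [Pi.smul_apply, smul_eq_mul, RingHom.id_apply, Finset.mul_sum]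
    refine Finset.sum_congr rfl fun i _ => ?_
    split_ifs <;> ring

theorem U_apply {M : ℕ} (x : (Fin (M+1) → Bool) → ℝ) (S : Fin (M+1) → Bool) :
    U M x S = ∑ i : Fin M, √(w i) * (if up i S then x (sw i S) else 0) := rfl

theorem abel {M : ℕ} (S : Fin (M+1) → Bool) :
    ∑ i : Fin M, w i * ((if dn i S then 1 else 0) - (if up i S then 1 else 0))
    = (M:ℝ) * cd S - 2 * wt S := by
  have h1 : ∀ i : Fin M, w i * ((if dn i S then (1:ℝ) else 0) - (if up i S then 1 else 0))
     = w i * (if S i.castSucc = true then 1 else 0) - w i * (if S i.succ = true then 1 else 0) := by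
    intro i
    unfold dn up
    by_cases a : S i.castSucc = true <;> by_cases b : S i.succ = true <;> simp [a, b]
  have h2 : ∑ j : Fin (M+1), ((j:ℕ) + 1 : ℝ) * ((M:ℝ) - (j:ℕ)) * (if S j = true then 1 else 0)
      = ∑ i : Fin M, w i * (if S i.castSucc = true then 1 else 0) := by
    rw [Fin.sum_univ_castSucc]; simp [w]
  have h3 : ∑ j : Fin (M+1), ((j:ℕ) : ℝ) * ((M:ℝ) + 1 - (j:ℕ)) * (if S j = true then 1 else 0)
      = ∑ i : Fin M, w i * (if S i.succ = true then 1 else 0) := by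
    rw [Fin.sum_univ_succ]; simp [w]
  simp only [h1]
  rw [Finset.sum_sub_distrib, ← h2, ← h3, ← Finset.sum_sub_distrib]
  unfold cd wt
  push_cast
  rw [Finset.mul_sum, Finset.mul_sum, ← Finset.sum_sub_distrib]
  refine Finset.sum_congr rfl fun i _ => ?_
  split_ifs <;> ring

theorem norm_id {M : ℕ} (x : (Fin (M+1) → Bool) → ℝ) :
    ∑ S, (U M x S)^2 = ∑ S, (∑ i : Fin M, √(w i) * (if dn i S then x (sw i S) else 0))^2
      + ∑ S, ((M:ℝ) * cd S - 2 * wt S) * x S ^ 2 := by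
  have exp : ∀ g : Fin M → (Fin (M+1) → Bool) → ℝ, ∑ S, (∑ i : Fin M, √(w i) * g i S)^2
      = ∑ i, ∑ j, √(w i) * √(w j) * ∑ S, g i S * g j S := by
    intro g
    simp only [sq, Finset.sum_mul_sum]
    rw [Finset.sum_comm]
    refine Finset.sum_congr rfl fun i _ => ?_
    rw [Finset.sum_comm]
    refine Finset.sum_congr rfl fun j _ => ?_
    rw [Finset.mul_sum]
    refine Finset.sum_congr rfl fun S _ => ?_
    ring
  simp only [U_apply]
  rw [exp (fun i S => if up i S then x (sw i S) else 0),
    exp (fun i S => if dn i S then x (sw i S) else 0)]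
  have hd : ∀ i j : Fin M, √(w i) * √(w j) *
      ∑ S, (if up i S then x (sw i S) else 0) * (if up j S then x (sw j S) else 0)
      = √(w i) * √(w j) *
      ∑ S, (if dn i S then x (sw i S) else 0) * (if dn j S then x (sw j S) else 0)
      + if i = j then w i * ∑ S, ((if dn i S then 1 else 0) - (if up i S then 1 else 0)) * x S ^ 2
        else 0 := by
    intro i j
    by_cases h : i = j
    · subst h
      rw [if_pos rfl, diag, diag', Real.mul_self_sqrt (w_nonneg i), ← mul_add,
        ← Finset.sum_add_distrib]
      congr 1
      refine Finset.sum_congr rfl fun S _ => ?_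
      split_ifs <;> ring
    · rw [if_neg h, cross x i j h, add_zero]
  simp only [hd, Finset.sum_add_distrib, Finset.sum_ite_eq, Finset.mem_univ, if_true]
  congr 1
  simp only [← abel, Finset.mul_sum, Finset.sum_mul]
  rw [Finset.sum_comm]
  refine Finset.sum_congr rfl fun S _ => Finset.sum_congr rfl fun i _ => ?_
  ring

theorem U_inj {M : ℕ} (x : (Fin (M+1) → Bool) → ℝ)
    (hx : ∀ S, x S ≠ 0 → (0:ℝ) < (M:ℝ) * cd S - 2 * wt S) (h0 : U M x = 0) : x = 0 := by
  have h := norm_id x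
  rw [h0] at h
  simp only [Pi.zero_apply, ne_eq, OfNat.ofNat_ne_zero, not_false_eq_true, zero_pow,
    Finset.sum_const_zero] at h
  have hn : ∀ S ∈ (Finset.univ : Finset (Fin (M+1) → Bool)),
      0 ≤ ((M:ℝ) * cd S - 2 * wt S) * x S ^ 2 := by
    intro S _
    by_cases hS : x S = 0
    · simp [hS]
    · exact mul_nonneg (hx S hS).le (sq_nonneg _)
  have h1 : 0 ≤ ∑ S, (∑ i : Fin M, √(w i) * (if dn i S then x (sw i S) else 0))^2 :=
    Finset.sum_nonneg fun _ _ => sq_nonneg _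
  have h2 := Finset.sum_nonneg hn
  have h3 := (Finset.sum_eq_zero_iff_of_nonneg hn).1 (by linarith)
  ext S
  by_contra hS
  have := h3 S (Finset.mem_univ _)
  have p := hx S hS
  have q : 0 < x S ^ 2 := sq_pos_of_ne_zero hS
  have := mul_pos p q
  linarith

theorem cd_sw {M : ℕ} (i : Fin M) (S : Fin (M+1) → Bool) : cd (sw i S) = cd S := by
  unfold cd sw
  exact Equiv.sum_comp (Equiv.swap i.castSucc i.succ) (fun j => if S j = true then 1 else 0)

theorem wt_sw {M : ℕ} (i : Fin M) (S : Fin (M+1) → Bool) (h : up i S) :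
    wt S = wt (sw i S) + 1 := by
  have h1 : wt (sw i S) = ∑ j, if S j = true then ((Equiv.swap i.castSucc i.succ j : Fin (M+1)) : ℕ)
      else 0 := by
    unfold wt
    rw [← Equiv.sum_comp (Equiv.swap i.castSucc i.succ)]
    simp [sw]
  have h2 : (wt S : ℕ) = ∑ j, ((if S j = true then
      ((Equiv.swap i.castSucc i.succ j : Fin (M+1)) : ℕ) else 0) + if j = i.succ then 1 else 0) := by
    unfold wt
    refine Finset.sum_congr rfl fun j _ => ?_
    by_cases a1 : j = i.succ
    · subst a1; simp [h.2]
    by_cases a2 : j = i.castSucc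
    · subst a2; simp [h.1, cs_ne]
    rw [Equiv.swap_apply_of_ne_of_ne a2 a1]; simp [a1]
  rw [h2, h1, Finset.sum_add_distrib]; simp

/-- conjugation -/
def tau {M : ℕ} (S : Fin (M+1) → Bool) : Fin (M+1) → Bool := fun j => !S j.rev

theorem tau_tau {M : ℕ} (S : Fin (M+1) → Bool) : tau (tau S) = S := by
  ext j; simp [tau]

theorem tau_sw {M : ℕ} (i : Fin M) (S : Fin (M+1) → Bool) :
    sw i (tau S) = tau (sw i.rev S) := by
  ext j
  have : (Equiv.swap i.castSucc i.succ j).rev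
      = Equiv.swap i.rev.castSucc i.rev.succ j.rev := by
    rw [← Fin.rev_succ, ← Fin.rev_castSucc, Equiv.swap_comm]
    exact Fin.rev_injective.map_swap i.succ i.castSucc j
  simp only [sw, tau, this]

theorem up_tau {M : ℕ} (i : Fin M) (S : Fin (M+1) → Bool) : up i (tau S) ↔ up i.rev S := by
  simp only [up, tau, Fin.rev_castSucc, Fin.rev_succ]
  simp; tauto

theorem w_rev {M : ℕ} (i : Fin M) : w i.rev = w i := by
  unfold w
  rw [Fin.val_rev, Nat.cast_sub (by omega)]
  push_cast; ring

theorem U_tau {M : ℕ} (x : (Fin (M+1) → Bool) → ℝ) : U M (x ∘ tau) = (U M x) ∘ tau := by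
  ext S
  simp only [Function.comp, U_apply]
  rw [← Equiv.sum_comp Fin.revPerm]
  refine Finset.sum_congr rfl fun i _ => ?_
  simp only [Fin.revPerm_apply, w_rev, up_tau, tau_sw]

theorem cd_tau {M : ℕ} (S : Fin (M+1) → Bool) : cd (tau S) + cd S = M + 1 := by
  unfold cd tau
  rw [← Equiv.sum_comp Fin.revPerm, ← Finset.sum_add_distrib]
  simp only [Fin.revPerm_apply, Fin.rev_rev]
  have : ∀ i, ((if (!S i) = true then 1 else 0) + if S i = true then 1 else 0) = 1 := by
    intro i; cases S i <;> simp
  rw [Finset.sum_congr rfl fun i _ => this i]; simp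

theorem wt_tau {M : ℕ} (S : Fin (M+1) → Bool) :
    2 * (wt (tau S) : ℤ) - M * cd (tau S) = 2 * (wt S : ℤ) - M * cd S := by
  have hsum : ∑ i : Fin (M+1), (2 * ((i:ℕ):ℤ) - M) = 0 := by
    have : ∑ i : Fin (M+1), (2 * ((i:ℕ):ℤ) - M) = ∑ i : Fin (M+1), -(2 * ((i:ℕ):ℤ) - M) := by
      rw [← Equiv.sum_comp Fin.revPerm]
      refine Finset.sum_congr rfl fun i _ => ?_
      rw [Fin.revPerm_apply, Fin.val_rev, Nat.cast_sub (by omega)]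
      push_cast; ring
    rw [Finset.sum_neg_distrib] at this
    linarith
  have e : ∀ S : Fin (M+1) → Bool, 2 * (wt S : ℤ) - M * cd S
      = ∑ i, (if S i = true then (2 * ((i:ℕ):ℤ) - M) else 0) := by
    intro S
    unfold wt cd
    push_cast
    rw [Finset.mul_sum, Finset.mul_sum, ← Finset.sum_sub_distrib]
    refine Finset.sum_congr rfl fun i _ => ?_
    split_ifs <;> ring
  rw [e, e, ← Equiv.sum_comp Fin.revPerm, ← sub_eq_zero, ← Finset.sum_sub_distrib]
  trans -∑ i : Fin (M+1), (2 * ((i:ℕ):ℤ) - M)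
  swap
  · rw [hsum, neg_zero]
  rw [← Finset.sum_neg_distrib]
  refine Finset.sum_congr rfl fun i _ => ?_
  rw [Fin.revPerm_apply, Fin.val_rev, Nat.cast_sub (by omega)]
  simp only [tau, Fin.rev_rev]
  cases S i <;> simp
  ring

/-- the states with `n` occupied sites of total weight `s` -/
def X (M n s : ℕ) : Finset (Fin (M+1) → Bool) := Finset.univ.filter fun S => cd S = n ∧ wt S = s

theorem mem_X {M n s : ℕ} (S : Fin (M+1) → Bool) : S ∈ X M n s ↔ cd S = n ∧ wt S = s := by
  simp [X]

theorem X_tau {M n s : ℕ} (h : M + 1 = n + n) (S : Fin (M+1) → Bool) (hS : S ∈ X M n s) :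
    tau S ∈ X M n s := by
  rw [mem_X] at *
  have h1 := cd_tau S
  have h2 := wt_tau S
  have h3 : cd (tau S) = n := by omega
  rw [h3, hS.1] at h2
  exact ⟨h3, by have := hS.2; omega⟩

theorem main_le {M n s : ℕ} (h : M + 1 = n + n) (hs : 2 * s < M * n) :
    ((X M n s).card : ℤ) - (((X M n s).filter (fun S => tau S = S)).card : ℤ)
    ≤ ((X M n (s+1)).card : ℤ) - (((X M n (s+1)).filter (fun S => tau S = S)).card : ℤ) := by
  apply anti_le tau tau_tau (U M) U_tau
  · exact fun a => X_tau h a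
  · exact fun a => X_tau h a
  · intro x hx S hS
    rw [U_apply]
    refine Finset.sum_eq_zero fun i _ => ?_
    split_ifs with hu
    · rw [hx, mul_zero]
      intro hm
      apply hS
      rw [mem_X] at *
      rw [cd_sw] at hm
      exact ⟨hm.1, by rw [wt_sw i S hu, hm.2]⟩
    · simp
  · intro x hx h0
    apply U_inj x _ h0
    intro S hS
    have : S ∈ X M n s := by by_contra hc; exact hS (hx S hc)
    rw [mem_X] at this
    rw [this.1, this.2]
    have : (2 * s : ℝ) < M * n := by exact_mod_cast hs
    linarith

theorem cd_rev {M : ℕ} (S : Fin (M+1) → Bool) : cd (S ∘ Fin.rev) = cd S := by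
  unfold cd
  exact Equiv.sum_comp Fin.revPerm (fun j => if S j = true then 1 else 0)

theorem wt_rev {M : ℕ} (S : Fin (M+1) → Bool) : wt (S ∘ Fin.rev) + wt S = M * cd S := by
  unfold cd wt
  rw [← Equiv.sum_comp Fin.revPerm, ← Finset.sum_add_distrib, Finset.mul_sum]
  refine Finset.sum_congr rfl fun i _ => ?_
  simp only [Function.comp, Fin.revPerm_apply, Fin.rev_rev, Fin.val_rev]
  split_ifs <;> omega

theorem rev_mem {M n s s' : ℕ} (h : s + s' = M * n) (S : Fin (M+1) → Bool)
    (hS : S ∈ X M n s) : S ∘ Fin.rev ∈ X M n s' := by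
  rw [mem_X] at *
  have := wt_rev S
  rw [cd_rev]
  rw [hS.1] at this
  exact ⟨hS.1, by omega⟩

theorem rr {M : ℕ} (S : Fin (M+1) → Bool) : (S ∘ Fin.rev) ∘ Fin.rev = S := by
  ext; simp

theorem tau_rev {M : ℕ} (S : Fin (M+1) → Bool) (h : tau S = S) :
    tau (S ∘ Fin.rev) = S ∘ Fin.rev := by
  conv_rhs => rw [← h]
  ext; simp [tau]

theorem X_symm {M n s s' : ℕ} (h : s + s' = M * n) : (X M n s).card = (X M n s').card := by
  apply Finset.card_bij' (fun S _ => S ∘ Fin.rev) (fun S _ => S ∘ Fin.rev)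
  · exact fun S => rev_mem h S
  · exact fun S => rev_mem (by omega) S
  · exact fun S _ => rr S
  · exact fun S _ => rr S

theorem F_symm {M n s s' : ℕ} (h : s + s' = M * n) :
    ((X M n s).filter (fun S => tau S = S)).card = ((X M n s').filter (fun S => tau S = S)).card := by
  apply Finset.card_bij' (fun S _ => S ∘ Fin.rev) (fun S _ => S ∘ Fin.rev)
  · intro S hS
    rw [mem_filter] at *
    exact ⟨rev_mem h S hS.1, tau_rev S hS.2⟩
  · intro S hS
    rw [mem_filter] at *
    exact ⟨rev_mem (by omega) S hS.1, tau_rev S hS.2⟩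
  · exact fun S _ => rr S
  · exact fun S _ => rr S


/-! ### Part 3: bijections -/

/-- multisets in a box with shifted sum -/
abbrev PP (l m c k : ℕ) := {s : Multiset ℕ // s.card ≤ l ∧ (∀ i ∈ s, 0 < i ∧ i ≤ m) ∧ s.sum + c = k}
/-- states with shifted weight -/
abbrev XX (t l c k : ℕ) := {S : Fin t → Bool // cd S = l ∧ wt S + c = k}

theorem cd_snoc {t : ℕ} (S : Fin t → Bool) (b : Bool) :
    cd (Fin.snoc S b : Fin (t+1) → Bool) = cd S + if b = true then 1 else 0 := by
  unfold cd; rw [Fin.sum_univ_castSucc]; simp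

theorem wt_snoc {t : ℕ} (S : Fin t → Bool) (b : Bool) :
    wt (Fin.snoc S b : Fin (t+1) → Bool) = wt S + if b = true then t else 0 := by
  unfold wt; rw [Fin.sum_univ_castSucc]; simp

theorem XX_rec (t l c k : ℕ) : Nonempty (XX (t+1) (l+1) c k ≃ XX t (l+1) c k ⊕ XX t l (t + c) k) := by
  refine ⟨Equiv.symm (Equiv.ofBijective (Sum.elim
    (fun S => ⟨Fin.snoc S.1 false, ?_⟩) (fun S => ⟨Fin.snoc S.1 true, ?_⟩)) ⟨?_, ?_⟩)⟩
  · have := S.2; rw [cd_snoc, wt_snoc]; simpa using this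
  · have := S.2; rw [cd_snoc, wt_snoc]; simp; omega
  · rintro (⟨S, hS⟩ | ⟨S, hS⟩) (⟨T, hT⟩ | ⟨T, hT⟩) h <;>
    · simp only [Sum.elim_inl, Sum.elim_inr, Subtype.mk.injEq] at h
      have h1 := congrFun h (Fin.last t)
      have h2 : S = T := by
        ext i; have := congrFun h i.castSucc; simpa using this
      simp at h1
      try simp [h2]
  · rintro ⟨S, hS⟩
    have e : (Fin.snoc (fun i => S (Fin.castSucc i)) (S (Fin.last t)) : Fin (t+1) → Bool) = S :=
      Fin.snoc_init_self S
    rw [← e, cd_snoc, wt_snoc] at hS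
    cases hb : S (Fin.last t) with
    | false =>
      rw [hb] at e hS
      exact ⟨Sum.inl ⟨fun i => S (Fin.castSucc i), by simpa using hS⟩, by
        simp only [Sum.elim_inl, Subtype.mk.injEq]; exact e⟩
    | true =>
      rw [hb] at e hS
      exact ⟨Sum.inr ⟨fun i => S (Fin.castSucc i), by simp at hS; omega⟩, by
        simp only [Sum.elim_inr, Subtype.mk.injEq]; exact e⟩

theorem PP_rec (l m c k : ℕ) :
    Nonempty (PP (l+1) (m+1) c k ≃ PP (l+1) m c k ⊕ PP l (m+1) (m + 1 + c) k) := by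
  refine ⟨Equiv.symm (Equiv.ofBijective (Sum.elim
    (fun s => ⟨s.1, ?_⟩) (fun s => ⟨(m+1) ::ₘ s.1, ?_⟩)) ⟨?_, ?_⟩)⟩
  · obtain ⟨h1, h2, h3⟩ := s.2
    exact ⟨h1, fun i hi => ⟨(h2 i hi).1, by have := (h2 i hi).2; omega⟩, h3⟩
  · obtain ⟨h1, h2, h3⟩ := s.2
    refine ⟨by simpa using h1, ?_, by simp; omega⟩
    intro i hi
    rcases Multiset.mem_cons.1 hi with rfl | hi
    · omega
    · exact h2 i hi
  · rintro (⟨S, hS⟩ | ⟨S, hS⟩) (⟨T, hT⟩ | ⟨T, hT⟩) h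
    · simpa using h
    · simp only [Sum.elim_inl, Sum.elim_inr, Subtype.mk.injEq] at h
      have := (hS.2.1 (m+1) (by rw [h]; simp)).2
      omega
    · simp only [Sum.elim_inl, Sum.elim_inr, Subtype.mk.injEq] at h
      have := (hT.2.1 (m+1) (by rw [← h]; simp)).2
      omega
    · simpa using h
  · rintro ⟨s, hs⟩
    obtain ⟨h1, h2, h3⟩ := hs
    by_cases hm : m + 1 ∈ s
    · obtain ⟨u, rfl⟩ := Multiset.exists_cons_of_mem hm
      refine ⟨Sum.inr ⟨u, by simpa using h1, fun i hi => h2 i (Multiset.mem_cons_of_mem hi), ?_⟩, rfl⟩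
      simp at h3; omega
    · refine ⟨Sum.inl ⟨s, h1, fun i hi => ⟨(h2 i hi).1, ?_⟩, h3⟩, rfl⟩
      have := (h2 i hi).2
      have : i ≠ m + 1 := fun h => hm (h ▸ hi)
      omega

theorem equiv_of_unique {α β : Type*} {p : α → Prop} {q : β → Prop} (a : α) (b : β) (r : Prop)
    (hp : ∀ x, p x ↔ x = a ∧ r) (hq : ∀ x, q x ↔ x = b ∧ r) :
    Nonempty ({x // p x} ≃ {x // q x}) :=
  ⟨{ toFun := fun x => ⟨b, (hq b).2 ⟨rfl, ((hp _).1 x.2).2⟩⟩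
     invFun := fun x => ⟨a, (hp a).2 ⟨rfl, ((hq _).1 x.2).2⟩⟩
     left_inv := fun x => Subtype.ext ((hp _).1 x.2).1.symm
     right_inv := fun x => Subtype.ext ((hq _).1 x.2).1.symm }⟩

/-- triangular numbers -/
def tri (l : ℕ) : ℕ := ∑ i ∈ range l, i

theorem tri_succ (l : ℕ) : tri (l+1) = tri l + l := by simp [tri, Finset.sum_range_succ]

theorem PP_zero_left (m c k : ℕ) (s : Multiset ℕ) :
    (s.card ≤ 0 ∧ (∀ i ∈ s, 0 < i ∧ i ≤ m) ∧ s.sum + c = k) ↔ s = 0 ∧ c = k := by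
  constructor
  · rintro ⟨h1, _, h3⟩
    have : s = 0 := by simpa using h1
    subst this
    simpa using h3
  · rintro ⟨rfl, h⟩; simpa using h

theorem PP_zero_right (l c k : ℕ) (s : Multiset ℕ) :
    (s.card ≤ l ∧ (∀ i ∈ s, 0 < i ∧ i ≤ 0) ∧ s.sum + c = k) ↔ s = 0 ∧ c = k := by
  constructor
  · rintro ⟨_, h2, h3⟩
    have : s = 0 := by
      apply Multiset.eq_zero_of_forall_notMem
      intro a ha
      have := h2 a ha
      omega
    subst this
    simpa using h3
  · rintro ⟨rfl, h⟩; simpa using h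

theorem XX_zero (t c k : ℕ) (S : Fin t → Bool) :
    (cd S = 0 ∧ wt S + c = k) ↔ S = (fun _ => false) ∧ c = k := by
  constructor
  · rintro ⟨h1, h2⟩
    have : S = fun _ => false := by
      unfold cd at h1
      rw [Finset.sum_eq_zero_iff] at h1
      ext i
      simpa using h1 i (mem_univ _)
    subst this
    simpa [wt] using h2
  · rintro ⟨rfl, h⟩; simpa [cd, wt] using h

theorem XX_full (t c k : ℕ) (S : Fin t → Bool) :
    (cd S = t ∧ wt S + c = k) ↔ S = (fun _ => true) ∧ c + tri t = k := by
  have hw : wt (fun _ : Fin t => true) = tri t := by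
    simp only [wt, tri, if_true]
    exact Fin.sum_univ_eq_sum_range (fun i => i) t
  constructor
  · rintro ⟨h1, h2⟩
    have : S = fun _ => true := by
      unfold cd at h1
      have h3 : (Finset.univ.filter (fun i => S i = true)).card = (Finset.univ : Finset (Fin t)).card := by
        rw [Finset.card_filter, h1]; simp
      have h4 := (Finset.card_filter_eq_iff).1 h3
      ext i
      simpa using h4 i (mem_univ _)
    subst this
    exact ⟨rfl, by omega⟩
  · rintro ⟨rfl, h⟩
    exact ⟨by simp [cd], by omega⟩

theorem PX (N : ℕ) : ∀ l m c k, l + m = N → Nonempty (PP l m (c + tri l) k ≃ XX (l + m) l c k) := by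
  induction N with
  | zero =>
    intro l m c k h
    obtain rfl : l = 0 := by omega
    obtain rfl : m = 0 := by omega
    exact equiv_of_unique 0 (fun _ => false) (c = k) (fun s => by simpa [tri] using PP_zero_left 0 c k s)
      (fun S => XX_zero _ c k S)
  | succ N ih =>
    intro l m c k h
    rcases l with _ | l
    · exact equiv_of_unique 0 (fun _ => false) (c = k)
        (fun s => by simpa [tri] using PP_zero_left m c k s) (fun S => XX_zero _ c k S)
    rcases m with _ | m
    · exact equiv_of_unique 0 (fun _ => true) (c + tri (l+1) = k)
        (fun s => PP_zero_right _ _ k s) (fun S => XX_full _ c k S)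
    obtain ⟨e1⟩ := PP_rec l m (c + tri (l+1)) k
    obtain ⟨e2⟩ := XX_rec (l + 1 + m) l c k
    obtain ⟨e3⟩ := ih (l+1) m c k (by omega)
    obtain ⟨e4⟩ := ih l (m+1) (l + 1 + m + c) k (by omega)
    have q1 : m + 1 + (c + tri (l+1)) = l + 1 + m + c + tri l := by rw [tri_succ]; omega
    have q2 : l + (m + 1) = l + 1 + m := by omega
    rw [q1] at e1
    rw [q2] at e4
    exact ⟨e1.trans ((Equiv.sumCongr e3 e4).trans e2.symm)⟩

theorem rect_eq (k l m : ℕ) : rectPartitions k l m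
    = (Finset.univ.filter fun S : Fin (l + m) → Bool => cd S = l ∧ wt S = k + tri l).card := by
  have e0 : {π : Nat.Partition k // Multiset.card π.parts ≤ l ∧ ∀ i ∈ π.parts, i ≤ m}
      ≃ PP l m (0 + tri l) (k + tri l) :=
    { toFun := fun π => ⟨π.1.parts, π.2.1, fun i hi => ⟨π.1.parts_pos hi, π.2.2 i hi⟩, by
        have := π.1.parts_sum; omega⟩
      invFun := fun s => ⟨⟨s.1, fun {i} hi => (s.2.2.1 i hi).1, by have := s.2.2.2; omega⟩,
        s.2.1, fun i hi => (s.2.2.1 i hi).2⟩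
      left_inv := fun π => rfl
      right_inv := fun s => rfl }
  obtain ⟨e1⟩ := PX _ l m 0 (k + tri l) rfl
  unfold rectPartitions
  rw [Nat.card_congr (e0.trans e1), Nat.card_eq_fintype_card, Fintype.card_subtype]
  simp

theorem odd_eq (k n : ℕ) : distinctOddPartitions k n
    = (Finset.univ.filter fun T : Fin n → Bool =>
        (∑ j, if T j = true then 2 * (j : ℕ) + 1 else 0) = k).card := by
  unfold distinctOddPartitions
  rw [← Fintype.card_subtype, ← Nat.card_eq_fintype_card]
  symm
  have hinj : Function.Injective (fun j : Fin n => 2 * (j:ℕ) + 1) := by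
    intro a b h; simp at h; exact Fin.ext h
  have hmem : ∀ (T : Fin n → Bool) (i : ℕ),
      i ∈ ((Finset.univ.filter fun j => T j = true).val.map fun j : Fin n => 2 * (j:ℕ) + 1) ↔
      ∃ j : Fin n, T j = true ∧ 2 * (j:ℕ) + 1 = i := by
    intro T i
    simp [Multiset.mem_map]
  have hsum : ∀ T : Fin n → Bool,
      ((Finset.univ.filter fun j => T j = true).val.map fun j : Fin n => 2 * (j:ℕ) + 1).sum
      = ∑ j, if T j = true then 2 * (j : ℕ) + 1 else 0 := by
    intro T
    rw [← Finset.sum_filter]; rfl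
  refine Nat.card_congr (Equiv.ofBijective (fun T =>
    ⟨⟨(Finset.univ.filter fun j => T.1 j = true).val.map fun j : Fin n => 2 * (j:ℕ) + 1, ?_, ?_⟩,
      ?_, ?_⟩) ⟨?_, ?_⟩)
  · intro i hi
    obtain ⟨j, _, rfl⟩ := (hmem _ _).1 hi
    omega
  · rw [hsum]; exact T.2
  · exact (Finset.univ.filter fun j => T.1 j = true).nodup.map hinj
  · intro i hi
    obtain ⟨j, _, rfl⟩ := (hmem _ _).1 hi
    exact ⟨⟨j, rfl⟩, by omega⟩
  · rintro ⟨S, hS⟩ ⟨T, hT⟩ h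
    simp only [Subtype.mk.injEq, Nat.Partition.mk.injEq] at h
    have h1 := Multiset.map_injective hinj h
    have h2 := Finset.val_injective h1
    apply Subtype.ext
    ext j
    have := Finset.ext_iff.1 h2 j
    simp at this
    exact this
  · rintro ⟨π, h1, h2⟩
    have key : ((Finset.univ.filter fun j : Fin n => decide (2 * (j:ℕ) + 1 ∈ π.parts) = true).val.map
        fun j : Fin n => 2 * (j:ℕ) + 1) = π.parts := by
      refine (Multiset.Nodup.ext ((Finset.univ.filter _).nodup.map hinj) h1).2 ?_
      intro i
      rw [hmem]
      constructor
      · rintro ⟨j, hj, rfl⟩; simpa using hj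
      · intro hi
        obtain ⟨⟨j, rfl⟩, hj⟩ := h2 i hi
        exact ⟨⟨j, by omega⟩, by simpa using hi, rfl⟩
    refine ⟨⟨fun j => decide (2 * (j:ℕ) + 1 ∈ π.parts), ?_⟩, ?_⟩
    · rw [← hsum, key]; exact π.parts_sum
    · apply Subtype.ext
      apply Nat.Partition.ext
      exact key

end Stan

namespace Stan
open Finset

theorem fix_low {m : ℕ} (S : Fin (m+1+m+1) → Bool) (h : tau S = S) (j : Fin (m+1)) :
    S (Fin.castAdd (m+1) j : Fin (m+1+(m+1))) = !S (Fin.natAdd (m+1) j.rev : Fin (m+1+(m+1))) := by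
  have h1 := congrFun h (Fin.castAdd (m+1) j : Fin (m+1+(m+1)))
  have h2 : Fin.rev (Fin.castAdd (m+1) j : Fin (m+1+(m+1)))
      = (Fin.natAdd (m+1) j.rev : Fin (m+1+(m+1))) := by
    apply Fin.ext; simp only [Fin.val_rev, Fin.val_castAdd, Fin.val_natAdd]; omega
  rw [← h1]
  exact congrArg (fun a => !S a) h2

theorem wt_fix {m : ℕ} (S : Fin (m+1+m+1) → Bool) (h : tau S = S) :
    wt S = (∑ j : Fin (m+1),
      if S (Fin.natAdd (m+1) j : Fin (m+1+(m+1))) = true then 2 * (j : ℕ) + 1 else 0)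
      + tri (m+1) := by
  have ht : tri (m+1) = ∑ j : Fin (m+1), (j.rev : ℕ) := by
    refine Eq.trans ?_ (Equiv.sum_comp Fin.revPerm (fun j : Fin (m+1) => (j:ℕ))).symm
    exact (Fin.sum_univ_eq_sum_range (fun i => i) (m+1)).symm
  have h1 : wt S = (∑ j : Fin (m+1), if S (Fin.castAdd (m+1) j : Fin (m+1+(m+1))) = true
      then (j : ℕ) else 0) + ∑ j : Fin (m+1), if S (Fin.natAdd (m+1) j : Fin (m+1+(m+1))) = true
      then (m + 1 + j : ℕ) else 0 := by
    unfold wt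
    exact Fin.sum_univ_add (a := m+1) (b := m+1)
      (fun j : Fin (m+1+(m+1)) => if S j = true then (j:ℕ) else 0)
  rw [h1, ht, ← Equiv.sum_comp Fin.revPerm, ← Finset.sum_add_distrib, ← Finset.sum_add_distrib]
  refine Finset.sum_congr rfl fun j _ => ?_
  rw [Fin.revPerm_apply, fix_low S h, Fin.rev_rev, Fin.val_rev]
  cases S (Fin.natAdd (m+1) j : Fin (m+1+(m+1))) <;> simp
  omega

theorem fix_card (k m : ℕ) :
    ((X (m+1+m) (m+1) (k + tri (m+1))).filter (fun S => tau S = S)).card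
    = distinctOddPartitions k (m+1) := by
  rw [odd_eq]
  apply Finset.card_bij (fun S _ (j : Fin (m+1)) => S (Fin.natAdd (m+1) j : Fin (m+1+(m+1))))
  · intro S hS
    rw [mem_filter, mem_X] at hS
    have := wt_fix S hS.2
    rw [mem_filter]
    refine ⟨mem_univ _, ?_⟩
    rw [hS.1.2] at this
    exact (Nat.add_right_cancel this).symm
  · intro S hS T hT h
    rw [mem_filter] at hS hT
    have hst : ∀ j : Fin (m+1+(m+1)), S j = T j := by
      intro j
      refine Fin.addCases (fun j => ?_) (fun j => ?_) j
      · rw [fix_low S hS.2, fix_low T hT.2]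
        exact congrArg (!·) (congrFun h j.rev)
      · exact congrFun h j
    exact funext hst
  · intro T hT
    rw [mem_filter] at hT
    let S : Fin (m+1+m+1) → Bool :=
      (Fin.append (fun i : Fin (m+1) => !T i.rev) T : Fin (m+1+(m+1)) → Bool)
    have hl : ∀ j : Fin (m+1), S (Fin.castAdd (m+1) j : Fin (m+1+(m+1))) = !T j.rev :=
      fun j => Fin.append_left _ _ j
    have hr : ∀ j : Fin (m+1), S (Fin.natAdd (m+1) j : Fin (m+1+(m+1))) = T j :=
      fun j => Fin.append_right _ _ j
    have hτ : tau S = S := by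
      have : ∀ j : Fin (m+1+(m+1)), tau S j = S j := by
        intro j
        refine Fin.addCases (fun j => ?_) (fun j => ?_) j
        · have h2 : Fin.rev (Fin.castAdd (m+1) j : Fin (m+1+(m+1)))
              = (Fin.natAdd (m+1) j.rev : Fin (m+1+(m+1))) := by
            apply Fin.ext; simp only [Fin.val_rev, Fin.val_castAdd, Fin.val_natAdd]; omega
          rw [hl, ← hr]
          exact congrArg (fun a => !S a) h2
        · have h2 : Fin.rev (Fin.natAdd (m+1) j : Fin (m+1+(m+1)))
              = (Fin.castAdd (m+1) j.rev : Fin (m+1+(m+1))) := by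
            apply Fin.ext; simp only [Fin.val_rev, Fin.val_castAdd, Fin.val_natAdd]; omega
          have h3 : tau S (Fin.natAdd (m+1) j : Fin (m+1+(m+1)))
            = !S (Fin.castAdd (m+1) j.rev : Fin (m+1+(m+1))) := congrArg (fun a => !S a) h2
          rw [h3, hl, hr]; simp
      exact funext this
    refine ⟨S, ?_, funext hr⟩
    rw [mem_filter, mem_X]
    refine ⟨⟨?_, ?_⟩, hτ⟩
    · have := cd_tau S
      rw [hτ] at this; omega
    · rw [wt_fix S hτ]
      simp only [hr]
      rw [hT.2]

theorem rect_card (k m : ℕ) :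
    rectPartitions k (m+1) (m+1) = (X (m+1+m) (m+1) (k + tri (m+1))).card :=
  rect_eq k (m+1) (m+1)

theorem two_tri (l : ℕ) : 2 * tri (l+1) = (l+1) * l := by
  induction l with
  | zero => simp [tri]
  | succ l ih => rw [tri_succ, mul_add, ih]; ring

end Stan

/-- Stanley theorem. -/
theorem stanley_symmetric_unimodal (n : ℕ) (hn : 1 ≤ n) :
    (∀ k : ℕ, k ≤ n ^ 2 →
      (rectPartitions k n n : ℤ) - (distinctOddPartitions k n : ℤ) =
        (rectPartitions (n ^ 2 - k) n n : ℤ) - (distinctOddPartitions (n ^ 2 - k) n : ℤ)) ∧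
    (∀ k : ℕ, 1 ≤ k → 2 * k ≤ n ^ 2 →
      (rectPartitions (k - 1) n n : ℤ) - (distinctOddPartitions (k - 1) n : ℤ) ≤
        (rectPartitions k n n : ℤ) - (distinctOddPartitions k n : ℤ)) := by
  obtain ⟨m, rfl⟩ : ∃ m, n = m + 1 := ⟨n - 1, by omega⟩
  have ht := Stan.two_tri m
  have hM : (m + 1 + m) * (m + 1) = (m+1)^2 + (m+1) * m := by ring
  constructor
  · intro k hk
    simp only [Stan.rect_card, ← Stan.fix_card]
    have hs : (k + Stan.tri (m+1)) + ((m+1)^2 - k + Stan.tri (m+1)) = (m+1+m) * (m+1) := by omega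
    rw [Stan.X_symm hs, Stan.F_symm hs]
  · intro k hk hk2
    obtain ⟨j, rfl⟩ : ∃ j, k = j + 1 := ⟨k - 1, by omega⟩
    simp only [Stan.rect_card, ← Stan.fix_card, Nat.add_sub_cancel]
    have := Stan.main_le (M := m+1+m) (n := m+1) (s := j + Stan.tri (m+1)) (by omega) (by omega)
    rwa [show j + Stan.tri (m+1) + 1 = j + 1 + Stan.tri (m+1) by omega] at this
end

section
/- (Almkvist) For every natural number n ≥ 83 and every k with (n−1)² ≤ 2k ≤ n², one has (as real numbers) b_k(n) − b_{k−1}(n) ≥ C · 2^n / n^{9/2}, where C = 3√3/(√2·π²). -/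
section Helpers
open Finset

/-- number of subsets of `range n` with sum of the odd numbers `2i+1` equal to `k` -/
def cnt (k n : ℕ) : ℕ := (((range n).powerset).filter (fun S => ∑ i ∈ S, (2 * i + 1) = k)).card

lemma dop_eq (k n : ℕ) (hn : 1 ≤ n) : distinctOddPartitions k n = cnt k n := by
  unfold distinctOddPartitions cnt
  rw [← Fintype.card_coe, ← Nat.card_eq_fintype_card]
  have hinj : Function.Injective (fun i : ℕ => 2 * i + 1) := fun a b h => by
    simp only at h; omega
  symm
  refine Nat.card_congr (Equiv.ofBijective (fun S => ⟨⟨(S.1.map ⟨_, hinj⟩).val, ?_, ?_⟩, ?_, ?_⟩) ⟨?_, ?_⟩)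
  · intro i hi
    simp only [Finset.mem_val, Finset.mem_map, Function.Embedding.coeFn_mk] at hi
    obtain ⟨a, _, rfl⟩ := hi
    omega
  · have := (Finset.mem_filter.1 S.2).2
    rw [Finset.map_val]
    exact this
  · exact Finset.nodup _
  · intro i hi
    have hS := Finset.mem_powerset.1 (Finset.mem_filter.1 S.2).1
    simp only [Finset.mem_val, Finset.mem_map, Function.Embedding.coeFn_mk] at hi
    obtain ⟨a, ha, rfl⟩ := hi
    have := Finset.mem_range.1 (hS ha)
    exact ⟨⟨a, rfl⟩, by omega⟩
  · intro S T h
    simp only [Subtype.mk.injEq, Nat.Partition.mk.injEq, Finset.val_inj, Finset.map_inj] at h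
    exact Subtype.ext h
  · rintro ⟨p, hp, hq⟩
    have key : (((range n).filter (fun i => 2 * i + 1 ∈ p.parts)).map ⟨_, hinj⟩) = ⟨p.parts, hp⟩ := by
      ext i
      simp only [Finset.mem_map, Finset.mem_filter, Finset.mem_range, Function.Embedding.coeFn_mk, Finset.mem_mk]
      constructor
      · rintro ⟨a, ⟨_, h⟩, rfl⟩; exact h
      · intro h
        obtain ⟨⟨a, rfl⟩, h2⟩ := hq i h
        exact ⟨a, ⟨by omega, h⟩, rfl⟩
    refine ⟨⟨(range n).filter (fun i => 2 * i + 1 ∈ p.parts), ?_⟩, ?_⟩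
    · rw [Finset.mem_filter, Finset.mem_powerset]
      refine ⟨Finset.filter_subset _ _, ?_⟩
      have h1 := congrArg (fun s : Finset ℕ => ∑ x ∈ s, x) key
      simp only [Finset.sum_map, Function.Embedding.coeFn_mk] at h1
      rw [h1]
      have := p.parts_sum
      rw [Finset.sum, Multiset.map_id']
      exact this
    · apply Subtype.ext
      apply Nat.Partition.ext
      exact congrArg Finset.val key

noncomputable def W (n : ℕ) (t : ℝ) : ℝ := ∏ j ∈ range n, Real.cos ((2 * (j:ℝ) + 1) * t)

lemma sum_cos (n : ℕ) (t c : ℝ) :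
    ∑ S ∈ (range n).powerset, Real.cos (c + ((n:ℝ) ^ 2 - 2 * ∑ i ∈ S, (2 * (i:ℝ) + 1)) * t)
      = 2 ^ n * W n t * Real.cos c := by
  unfold W
  induction n generalizing c with
  | zero => simp
  | succ n ih =>
    rw [Finset.range_add_one, Finset.sum_powerset_insert Finset.notMem_range_self,
      Finset.prod_insert Finset.notMem_range_self]
    have h1 : ∀ S ∈ (range n).powerset,
        Real.cos (c + (((n+1:ℕ):ℝ) ^ 2 - 2 * ∑ i ∈ S, (2 * (i:ℝ) + 1)) * t)
        = Real.cos ((c + (2*n+1)*t) + ((n:ℝ) ^ 2 - 2 * ∑ i ∈ S, (2 * (i:ℝ) + 1)) * t) := by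
      intro S _; congr 1; push_cast; ring
    have h2 : ∀ S ∈ (range n).powerset,
        Real.cos (c + (((n+1:ℕ):ℝ) ^ 2 - 2 * ∑ i ∈ insert n S, (2 * (i:ℝ) + 1)) * t)
        = Real.cos ((c - (2*n+1)*t) + ((n:ℝ) ^ 2 - 2 * ∑ i ∈ S, (2 * (i:ℝ) + 1)) * t) := by
      intro S hS
      have : n ∉ S := fun h => Finset.notMem_range_self (Finset.mem_powerset.1 hS h)
      rw [Finset.sum_insert this]
      congr 1; push_cast; ring
    rw [Finset.sum_congr rfl h1, Finset.sum_congr rfl h2, ih, ih, Real.cos_add, Real.cos_sub]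
    ring

lemma W_cont (n : ℕ) : Continuous (W n) := by
  unfold W; fun_prop

lemma int_cos (M : ℤ) : ∫ t in (0:ℝ)..(Real.pi/2), Real.cos ((2 * (M:ℝ)) * t)
    = if M = 0 then Real.pi / 2 else 0 := by
  split_ifs with h
  · subst h; simp
  · have hM : (2 * (M:ℝ)) ≠ 0 := by
      have : (M:ℝ) ≠ 0 := by exact_mod_cast h
      positivity
    rw [intervalIntegral.integral_comp_mul_left (fun x => Real.cos x) hM]
    rw [integral_cos]
    have : 2 * (M:ℝ) * (Real.pi/2) = M * Real.pi := by ring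
    rw [this, Real.sin_int_mul_pi]
    simp

lemma cnt_int (k n : ℕ) : (Real.pi / 2) * (cnt k n : ℝ)
    = 2 ^ n * ∫ t in (0:ℝ)..(Real.pi/2), W n t * Real.cos (((n:ℝ)^2 - 2 * k) * t) := by
  have h : ∀ t : ℝ, 2 ^ n * (W n t * Real.cos (((n:ℝ)^2 - 2 * k) * t))
      = ∑ S ∈ (range n).powerset, Real.cos ((2 * (((k:ℤ) - ((∑ i ∈ S, (2 * i + 1) : ℕ) : ℤ) : ℤ) : ℝ)) * t) := by
    intro t
    have := sum_cos n t (-(((n:ℝ)^2 - 2 * k) * t))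
    rw [Real.cos_neg] at this
    rw [← mul_assoc, ← this]
    refine Finset.sum_congr rfl fun S _ => ?_
    congr 1; push_cast; ring
  rw [← intervalIntegral.integral_const_mul]
  simp_rw [h]
  rw [intervalIntegral.integral_finsetSum]
  · simp_rw [int_cos]
    rw [Finset.sum_ite, Finset.sum_const_zero, add_zero, Finset.sum_const, nsmul_eq_mul, mul_comm]
    congr 2
    unfold cnt
    congr 1
    refine Finset.filter_congr fun S _ => ?_
    omega
  · intro S _
    apply Continuous.intervalIntegrable
    fun_prop

lemma diff_int (k n : ℕ) (hk : 1 ≤ k) : (Real.pi / 2) * ((cnt k n : ℝ) - cnt (k-1) n)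
    = 2 ^ (n+1) * ∫ t in (0:ℝ)..(Real.pi/2), W n t * (Real.sin (((n:ℝ)^2 - 2 * k + 1) * t) * Real.sin t) := by
  have hc := W_cont n
  rw [mul_sub, cnt_int, cnt_int, ← mul_sub, ← intervalIntegral.integral_sub, pow_succ 2 n, mul_assoc,
    ← intervalIntegral.integral_const_mul (2:ℝ)]
  · congr 1
    apply intervalIntegral.integral_congr
    intro t _
    simp only
    rw [← mul_sub, mul_left_comm]
    congr 1
    rw [Nat.cast_sub hk, Real.cos_sub_cos]
    have e1 : (((n:ℝ)^2 - 2 * k) * t + ((n:ℝ)^2 - 2 * (k - (1:ℕ))) * t) / 2 = ((n:ℝ)^2 - 2 * k + 1) * t := by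
      push_cast; ring
    have e2 : (((n:ℝ)^2 - 2 * k) * t - ((n:ℝ)^2 - 2 * (k - (1:ℕ))) * t) / 2 = -t := by
      push_cast; ring
    rw [e1, e2, Real.sin_neg]; ring
  · apply Continuous.intervalIntegrable; fun_prop
  · apply Continuous.intervalIntegrable; fun_prop

lemma sum_cos_sq (n : ℕ) (t : ℝ) :
    4 * Real.sin (2*t) * ∑ j ∈ range n, Real.cos ((2 * (j:ℝ) + 1) * t) ^ 2
      = 2 * n * Real.sin (2*t) + Real.sin (4 * n * t) := by
  induction n with
  | zero => simp
  | succ n ih =>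
    rw [Finset.sum_range_succ, mul_add, ih, Real.cos_sq]
    have e1 : 4 * ((n+1:ℕ):ℝ) * t = 2 * ((2 * (n:ℝ) + 1) * t) + 2 * t := by push_cast; ring
    have e2 : 4 * (n:ℝ) * t = 2 * ((2 * (n:ℝ) + 1) * t) - 2 * t := by ring
    rw [e1, e2, Real.sin_add, Real.sin_sub]
    push_cast; ring

lemma prod_le (n : ℕ) (t F : ℝ) (hF : 0 < F)
    (h : ∑ j ∈ range n, Real.cos ((2 * (j:ℝ) + 1) * t) ^ 2 ≤ n * F) : W n t ^ 2 ≤ F ^ n := by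
  unfold W
  rw [← Finset.prod_pow]
  calc ∏ j ∈ range n, Real.cos ((2 * (j:ℝ) + 1) * t) ^ 2
      ≤ ∏ j ∈ range n, (F * Real.exp (Real.cos ((2 * (j:ℝ) + 1) * t) ^ 2 / F - 1)) := by
        refine Finset.prod_le_prod (fun _ _ => sq_nonneg _) fun j _ => ?_
        have := Real.add_one_le_exp (Real.cos ((2 * (j:ℝ) + 1) * t) ^ 2 / F - 1)
        calc Real.cos ((2 * (j:ℝ) + 1) * t) ^ 2 = F * (Real.cos ((2 * (j:ℝ) + 1) * t) ^ 2 / F - 1 + 1) := by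
              field_simp; ring
          _ ≤ _ := by gcongr
    _ = F ^ n * Real.exp ((∑ j ∈ range n, Real.cos ((2 * (j:ℝ) + 1) * t) ^ 2) / F - n) := by
        rw [Finset.prod_mul_distrib, Finset.prod_const, card_range, ← Real.exp_sum,
          Finset.sum_sub_distrib, Finset.sum_div]
        simp
    _ ≤ F ^ n * 1 := by
        gcongr
        rw [Real.exp_le_one_iff, sub_nonpos, div_le_iff₀ hF]
        exact h
    _ = F ^ n := mul_one _

/-- AM-GM bound in usable form -/
lemma W_bound (n : ℕ) (t d : ℝ) (hd : 0 ≤ d) (hs : 0 < Real.sin (2*t))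
    (h : Real.sin (4 * n * t) ≤ d * (4 * n * Real.sin (2*t))) :
    |W n t| ≤ Real.sqrt ((1/2 + d) ^ n) := by
  apply Real.abs_le_sqrt
  apply prod_le _ _ _ (by positivity)
  have h1 := sum_cos_sq n t
  have : (0:ℝ) < 4 * Real.sin (2*t) := by positivity
  refine le_of_mul_le_mul_left ?_ this
  rw [h1]
  nlinarith

lemma sin_lb (x : ℝ) (h0 : 0 ≤ x) (h1 : x ≤ 2/25) : 0.998 * x ≤ Real.sin x := by
  rcases h0.eq_or_lt with rfl | h
  · simp
  · have := Real.sin_gt_sub_cube h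
    have h2 : x ^ 2 ≤ 0.0064 := by nlinarith
    nlinarith [mul_le_mul_of_nonneg_left h2 h0]

lemma abs_sin_le (n : ℕ) (x : ℝ) (h0 : Real.pi ≤ 4 * n * x) (h1 : x ≤ 1/25) (hx : 0 < x) :
    |Real.sin (4 * n * x)| ≤ (1/8) * (4 * n * Real.sin (2*x)) := by
  have hs := sin_lb (2*x) (by linarith) (by linarith)
  have hn : (0:ℝ) ≤ n := Nat.cast_nonneg n
  have h2 : 0.2495 * (4 * n * x) ≤ (1/8) * (4 * n * Real.sin (2*x)) := by
    nlinarith [mul_le_mul_of_nonneg_left hs hn]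
  refine le_trans ?_ h2
  have hp := Real.pi_gt_d2
  rcases le_total (4 * n * x) 4.1 with h | h
  · have e : Real.sin (4*n*x) = - Real.sin (4*n*x - Real.pi) := by
      rw [Real.sin_sub_pi, neg_neg]
    rw [e, abs_neg]
    have := Real.abs_sin_le_abs (x := 4*n*x - Real.pi)
    rw [abs_of_nonneg (a := 4*n*x - Real.pi) (by linarith)] at this
    linarith
  · have := Real.abs_sin_le_one (4*n*x)
    linarith

lemma bound_A (n : ℕ) (hn : 83 ≤ n) (t : ℝ) (h0 : Real.pi / (4 * n) ≤ t) (h1 : t ≤ 1/25) :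
    |W n t| ≤ Real.sqrt ((5/8) ^ n) := by
  have hn' : (83:ℝ) ≤ n := by exact_mod_cast hn
  have hp := Real.pi_gt_d2
  have ht : 0 < t := lt_of_lt_of_le (by positivity) h0
  have h0' : Real.pi ≤ 4 * n * t := by
    rw [div_le_iff₀ (by positivity)] at h0; linarith
  have := W_bound n t (1/8) (by norm_num)
    (Real.sin_pos_of_pos_of_lt_pi (by linarith) (by linarith))
    ((le_abs_self _).trans (abs_sin_le n t h0' h1 ht))
  norm_num at this ⊢
  exact this

lemma bound_C (n : ℕ) (hn : 83 ≤ n) (t : ℝ) (h0 : Real.pi / 2 - 1/25 ≤ t) (h1 : t ≤ Real.pi / 2) :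
    |W n t| ≤ Real.sqrt ((5/8) ^ n) := by
  have hn' : (83:ℝ) ≤ n := by exact_mod_cast hn
  have hp := Real.pi_gt_d2
  rcases h1.eq_or_lt with rfl | h1
  · have : W n (Real.pi/2) = 0 := by
      unfold W
      apply Finset.prod_eq_zero (i := 0) (by simp; omega)
      simp
    rw [this]; simp
  · obtain ⟨s, rfl⟩ : ∃ s, t = Real.pi/2 - s := ⟨Real.pi/2 - t, by ring⟩
    have e1 : Real.sin (2 * (Real.pi/2 - s)) = Real.sin (2*s) := by
      rw [← Real.sin_pi_sub]; congr 1; ring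
    have e2 : Real.sin (4 * n * (Real.pi/2 - s)) = - Real.sin (4*n*s) := by
      rw [← Real.sin_nat_mul_two_pi_sub _ n]; congr 1; ring
    have hsp : 0 < Real.sin (2*s) := Real.sin_pos_of_pos_of_lt_pi (by linarith) (by linarith)
    have := W_bound n (Real.pi/2 - s) (1/8) (by norm_num) (by rw [e1]; exact hsp) (by
      rw [e1, e2]
      rcases le_total Real.pi (4 * n * s) with h | h
      · exact (neg_le_abs _).trans (abs_sin_le n s h (by linarith) (by linarith))
      · have : 0 ≤ Real.sin (4*n*s) := Real.sin_nonneg_of_nonneg_of_le_pi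
          (by have : 0 < s := by linarith
              positivity) h
        have : 0 ≤ (1/8) * (4 * n * Real.sin (2*s)) := by positivity
        linarith)
    norm_num at this ⊢
    exact this

lemma bound_B (n : ℕ) (hn : 83 ≤ n) (t : ℝ) (h0 : 1/25 ≤ t) (h1 : t ≤ Real.pi / 2 - 1/25) :
    |W n t| ≤ Real.sqrt ((27/50) ^ n) := by
  have hn' : (83:ℝ) ≤ n := by exact_mod_cast hn
  have hp := Real.pi_gt_d2
  have hs0 := sin_lb (2/25) (by norm_num) (by norm_num)
  have hs : 0.0798 ≤ Real.sin (2*t) := by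
    rcases le_total t (Real.pi/4) with h | h
    · have := Real.sin_le_sin_of_le_of_le_pi_div_two (x := 2/25) (y := 2*t) (by linarith) (by linarith) (by linarith)
      linarith
    · rw [← Real.sin_pi_sub]
      have := Real.sin_le_sin_of_le_of_le_pi_div_two (x := 2/25) (y := Real.pi - 2*t) (by linarith) (by linarith) (by linarith)
      linarith
  have := W_bound n t (1/25) (by norm_num) (by linarith) (by
    have h1 := Real.sin_le_one (4*n*t)
    have : 83 * 0.0798 ≤ n * Real.sin (2*t) := by gcongr
    linarith)
  norm_num at this ⊢
  exact this

lemma one_sub_sum_le (n : ℕ) (z : ℕ → ℝ) (h0 : ∀ j ∈ range n, 0 ≤ z j) (h1 : ∀ j ∈ range n, z j ≤ 1) :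
    1 - ∑ j ∈ range n, z j ≤ ∏ j ∈ range n, (1 - z j) := by
  induction n with
  | zero => simp
  | succ n ih =>
    rw [Finset.sum_range_succ, Finset.prod_range_succ]
    have a := ih (fun j hj => h0 j (by simp at *; omega)) (fun j hj => h1 j (by simp at *; omega))
    have b := h0 n (by simp)
    have c := h1 n (by simp)
    have d : 0 ≤ ∑ j ∈ range n, z j := Finset.sum_nonneg (fun j hj => h0 j (by simp at *; omega))
    nlinarith [mul_le_mul_of_nonneg_right a (sub_nonneg.2 c)]

lemma sum_odd_sq (n : ℕ) : ∑ j ∈ range n, (2 * (j:ℝ) + 1) ^ 2 = (n:ℝ) * (4 * (n:ℝ) ^ 2 - 1) / 3 := by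
  induction n with
  | zero => simp
  | succ n ih => rw [Finset.sum_range_succ, ih]; push_cast; ring

lemma W_lower (n : ℕ) (hn : 83 ≤ n) (t : ℝ) (h0 : 0 ≤ t) (h1 : t ^ 2 * n ^ 3 ≤ 4) :
    (1 - t ^ 2 * n ^ 3 / 4) ^ 3 ≤ W n t := by
  have hn' : (83:ℝ) ≤ n := by exact_mod_cast hn
  have hx : ∀ j ∈ range n, ((2 * (j:ℝ) + 1) * t) ^ 2 ≤ 0.2 := by
    intro j hj
    have hj' : (j:ℝ) + 1 ≤ n := by exact_mod_cast Finset.mem_range.1 hj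
    have hj0 : (0:ℝ) ≤ j := Nat.cast_nonneg j
    have a : (2 * (j:ℝ) + 1) ^ 2 ≤ (2 * n) ^ 2 := by
      apply pow_le_pow_left₀ <;> linarith
    have b : ((2 * (j:ℝ) + 1) * t) ^ 2 ≤ (2 * n) ^ 2 * t ^ 2 := by
      rw [mul_pow]; gcongr
    have c : 83 * (t ^ 2 * n ^ 2) ≤ n * (t^2 * n^2) := by gcongr
    nlinarith
  have key := one_sub_sum_le n (fun j => 3/16 * ((2 * (j:ℝ) + 1) * t) ^ 2) (fun j _ => by positivity)
    (fun j hj => by have := hx j hj; linarith)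
  have hsum : ∑ j ∈ range n, 3/16 * ((2 * (j:ℝ) + 1) * t) ^ 2 ≤ t ^ 2 * n ^ 3 / 4 := by
    have : ∑ j ∈ range n, 3/16 * ((2 * (j:ℝ) + 1) * t) ^ 2 = 3/16 * t^2 * ∑ j ∈ range n, (2 * (j:ℝ) + 1) ^ 2 := by
      rw [Finset.mul_sum]; refine Finset.sum_congr rfl fun _ _ => by ring
    rw [this, sum_odd_sq]
    have : 0 ≤ t^2 * n := by positivity
    nlinarith
  calc (1 - t ^ 2 * n ^ 3 / 4) ^ 3 ≤ (∏ j ∈ range n, (1 - 3/16 * ((2 * (j:ℝ) + 1) * t) ^ 2)) ^ 3 := by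
        apply pow_le_pow_left₀ <;> linarith
    _ = ∏ j ∈ range n, (1 - 3/16 * ((2 * (j:ℝ) + 1) * t) ^ 2) ^ 3 := by rw [Finset.prod_pow]
    _ ≤ W n t := by
        unfold W
        refine Finset.prod_le_prod (fun j hj => ?_) (fun j hj => ?_)
        · have := hx j hj
          apply pow_nonneg; linarith
        · refine le_trans ?_ Real.one_sub_sq_div_two_le_cos
          have a := hx j hj
          have b : 0 ≤ ((2 * (j:ℝ) + 1) * t) ^ 2 := sq_nonneg _
          set u := ((2 * (j:ℝ) + 1) * t) ^ 2
          nlinarith [mul_nonneg b (sub_nonneg.2 a), pow_nonneg b 3]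

/-- pointwise positivity data on `[0, π/(4n)]` -/
lemma sin_mul_lower (n : ℕ) (hn : 83 ≤ n) (m t : ℝ) (hm1 : 1 ≤ m) (hm2 : m ≤ 2 * n) (h0 : 0 ≤ t)
    (h1 : t ≤ Real.pi / (4 * n)) : Real.sin t ≤ Real.sin (m * t) ∧ 0 ≤ Real.sin t ∧ 0 ≤ W n t := by
  have hn' : (83:ℝ) ≤ n := by exact_mod_cast hn
  have hp := Real.pi_gt_d2
  have h1' : 4 * n * t ≤ Real.pi := by
    rw [le_div_iff₀ (by positivity)] at h1; linarith
  have hmt : m * t ≤ Real.pi / 2 := by nlinarith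
  have htt : t ≤ m * t := by nlinarith
  refine ⟨Real.sin_le_sin_of_le_of_le_pi_div_two (by linarith) hmt htt,
    Real.sin_nonneg_of_nonneg_of_le_pi h0 (by linarith), ?_⟩
  refine Finset.prod_nonneg fun j hj => ?_
  have hj' : (j:ℝ) + 1 ≤ n := by exact_mod_cast Finset.mem_range.1 hj
  have hj0 : (0:ℝ) ≤ j := Nat.cast_nonneg j
  apply Real.cos_nonneg_of_neg_pi_div_two_le_of_le
  · have : 0 ≤ (2 * (j:ℝ) + 1) * t := by positivity
    linarith
  · nlinarith

lemma poly_int (b : ℝ) (hb : 0 < b) :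
    ∫ t in (0:ℝ)..b, t ^ 2 * (1 - t ^ 2 / b ^ 2) ^ 3 = 16 / 315 * b ^ 3 := by
  have h : ∀ t ∈ Set.uIcc 0 b, HasDerivAt
      (fun t : ℝ => t ^ 3 / 3 - 3 / 5 * t ^ 5 / b ^ 2 + 3 / 7 * t ^ 7 / b ^ 4 - t ^ 9 / 9 / b ^ 6)
      (t ^ 2 * (1 - t ^ 2 / b ^ 2) ^ 3) t := by
    intro t _
    have := ((((hasDerivAt_pow 3 t).div_const 3).sub ((((hasDerivAt_pow 5 t).const_mul (3/5)).div_const (b^2)))).add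
      (((hasDerivAt_pow 7 t).const_mul (3/7)).div_const (b^4))).sub (((hasDerivAt_pow 9 t).div_const 9).div_const (b^6))
    refine this.congr_deriv ?_
    field_simp
    push_cast
    ring
  rw [intervalIntegral.integral_eq_sub_of_hasDerivAt h (by apply Continuous.intervalIntegrable; fun_prop)]
  field_simp
  ring

lemma num_bound (n : ℕ) (hn : 83 ≤ n) : (n:ℝ) ^ 9 * (5/8) ^ n ≤ 4 := by
  induction n, hn using Nat.le_induction with
  | base => norm_num
  | succ n hn ih =>
    have hn' : (83:ℝ) ≤ n := by exact_mod_cast hn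
    have h1 : ((n+1:ℕ):ℝ) ≤ (84/83) * n := by push_cast; linarith
    have h2 : ((n+1:ℕ):ℝ) ^ 9 ≤ (84/83) ^ 9 * n ^ 9 := by
      rw [← mul_pow]; gcongr
    calc ((n+1:ℕ):ℝ) ^ 9 * (5/8) ^ (n+1) ≤ ((84/83) ^ 9 * (n:ℝ) ^ 9) * (5/8) ^ (n+1) := by gcongr
      _ = ((84/83) ^ 9 * (5/8)) * ((n:ℝ) ^ 9 * (5/8) ^ n) := by ring
      _ ≤ 1 * ((n:ℝ) ^ 9 * (5/8) ^ n) := by gcongr; norm_num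
      _ ≤ 4 := by linarith

lemma num_bound2 (n : ℕ) (hn : 83 ≤ n) :
    Real.sqrt ((27/50) ^ n) ≤ 0.0025 * Real.sqrt ((5/8) ^ n) := by
  apply Real.sqrt_le_iff.2
  refine ⟨by positivity, ?_⟩
  rw [mul_pow, Real.sq_sqrt (by positivity)]
  have : ((27:ℝ)/50) ^ n = (108/125) ^ n * (5/8) ^ n := by rw [← mul_pow]; norm_num
  rw [this]
  gcongr
  calc ((108:ℝ)/125) ^ n ≤ (108/125) ^ 83 := pow_le_pow_of_le_one (by norm_num) (by norm_num) hn
    _ ≤ _ := by norm_num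

lemma main_int (n : ℕ) (hn : 83 ≤ n) (m : ℝ) (hm1 : 1 ≤ m) (hm2 : m ≤ 2 * n) :
    0.3 / (n:ℝ) ^ ((9:ℝ)/2) ≤
      ∫ t in (0:ℝ)..(Real.pi/2), W n t * (Real.sin (m * t) * Real.sin t) := by
  have hn' : (83:ℝ) ≤ n := by exact_mod_cast hn
  have hp := Real.pi_gt_d2
  have hp2 := Real.pi_lt_d2
  have hc := W_cont n
  set f : ℝ → ℝ := fun t => W n t * (Real.sin (m * t) * Real.sin t) with hf
  have hfc : Continuous f := by fun_prop
  have hi : ∀ a b, IntervalIntegrable f MeasureTheory.volume a b := fun a b => hfc.intervalIntegrable a b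
  set r := Real.sqrt n with hr
  have hr2 : r ^ 2 = n := Real.sq_sqrt (by linarith)
  have hr9 : 9 ≤ r := Real.le_sqrt_of_sq_le (by linarith)
  have hr0 : 0 < r := by linarith
  have hpow : (n:ℝ) ^ ((9:ℝ)/2) = r ^ 9 := by
    rw [hr, Real.sqrt_eq_rpow, ← Real.rpow_natCast, ← Real.rpow_mul (by linarith)]
    norm_num
  set b := 2 / r ^ 3 with hb
  have hb0 : 0 < b := by positivity
  have hr3 : 729 ≤ r ^ 3 := by
    calc (729:ℝ) = 9 ^ 3 := by norm_num
      _ ≤ r ^ 3 := by gcongr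
  have hbs : b ≤ 0.003 := by
    rw [hb, div_le_iff₀ (by positivity)]; linarith
  have hb2 : b ^ 2 * n ^ 3 = 4 := by
    rw [← hr2, hb]; field_simp; norm_num
  have hbP : b ≤ Real.pi / (4 * n) := by
    rw [hb, ← hr2, div_le_div_iff₀ (by positivity) (by positivity)]
    have : 9 * r ^ 2 ≤ r * r ^ 2 := by gcongr
    nlinarith
  have hP25 : Real.pi / (4 * n) ≤ 1/25 := by
    rw [div_le_iff₀ (by positivity)]; linarith
  set ρ := Real.sqrt ((5/8) ^ n) with hρ
  have hρ0 : 0 ≤ ρ := Real.sqrt_nonneg _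
  have hρ2 : ρ ≤ 2 / r ^ 9 := by
    apply Real.sqrt_le_iff.2
    refine ⟨by positivity, ?_⟩
    rw [div_pow 2 (r ^ 9) 2, le_div_iff₀ (by positivity)]
    have := num_bound n hn
    have e : (r ^ 9) ^ 2 = (n:ℝ) ^ 9 := by rw [← hr2]; ring
    rw [e]; linarith
  have hσ := num_bound2 n hn
  set σ := Real.sqrt ((27/50) ^ n) with hσd
  have hσ0 : 0 ≤ σ := Real.sqrt_nonneg _
  -- main part
  have I1 : 0.98 * (16/315 * b ^ 3) ≤ ∫ t in (0:ℝ)..b, f t := by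
    rw [← poly_int b hb0, ← intervalIntegral.integral_const_mul]
    apply intervalIntegral.integral_mono_on hb0.le (by apply Continuous.intervalIntegrable; fun_prop) (hi _ _)
    rintro t ⟨h0, h1⟩
    obtain ⟨s1, s2, s3⟩ := sin_mul_lower n hn m t hm1 hm2 h0 (h1.trans hbP)
    have ht2 : t ^ 2 ≤ b ^ 2 := by gcongr
    have hw := W_lower n hn t h0 (by rw [← hb2]; gcongr)
    have e : t ^ 2 / b ^ 2 = t ^ 2 * n ^ 3 / 4 := by rw [← hb2]; field_simp
    have hs := sin_lb t h0 (by linarith)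
    have hss : 0.98 * t ^ 2 ≤ Real.sin (m*t) * Real.sin t := by
      calc 0.98 * t ^ 2 ≤ (0.998 * t) * (0.998 * t) := by nlinarith
        _ ≤ Real.sin (m*t) * Real.sin t := mul_le_mul (hs.trans s1) hs (by positivity) (s2.trans s1)
    have hq : 0 ≤ 1 - t ^ 2 * n ^ 3 / 4 := by
      rw [← e, sub_nonneg]; exact div_le_one_of_le₀ ht2 (by positivity)
    rw [e]
    calc 0.98 * (t ^ 2 * (1 - t ^ 2 * n ^ 3 / 4) ^ 3) = (1 - t ^ 2 * n ^ 3 / 4) ^ 3 * (0.98 * t ^ 2) := by ring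
      _ ≤ f t := by simp only [hf]; gcongr
  have I2 : 0 ≤ ∫ t in b..(Real.pi / (4 * n)), f t := by
    apply intervalIntegral.integral_nonneg hbP
    rintro t ⟨h0, h1⟩
    obtain ⟨s1, s2, s3⟩ := sin_mul_lower n hn m t hm1 hm2 (hb0.le.trans h0) h1
    have : 0 ≤ Real.sin (m*t) := s2.trans s1
    positivity
  have gen : ∀ (a c C s : ℝ), 0 ≤ C → a ≤ c → (∀ t, a ≤ t → t ≤ c → |W n t| ≤ C) →
      (∀ t, a ≤ t → t ≤ c → |Real.sin t| ≤ s) → -(C * s * (c - a)) ≤ ∫ t in a..c, f t := by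
    intro a c C s hC hac h1 h2
    have := intervalIntegral.norm_integral_le_of_norm_le_const (f := f) (a := a) (b := c) (C := C * s) (by
      intro t ht
      rw [Set.uIoc_of_le hac] at ht
      have a1 := h1 t ht.1.le ht.2
      have a2 := h2 t ht.1.le ht.2
      simp only [hf, Real.norm_eq_abs, abs_mul]
      have a3 := Real.abs_sin_le_one (m*t)
      calc |W n t| * (|Real.sin (m*t)| * |Real.sin t|) ≤ C * (1 * s) := by gcongr
        _ = C * s := by ring)
    rw [abs_of_nonneg (sub_nonneg.2 hac), Real.norm_eq_abs] at this
    exact (abs_le.1 this).1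
  have hpn : 0 < Real.pi / (4 * n) := by positivity
  have I3 := gen (Real.pi / (4*n)) (1/25) ρ (1/25) hρ0 hP25 (bound_A n hn) (by
    intro t h0 h1
    refine Real.abs_sin_le_abs.trans ?_
    rw [abs_of_nonneg (by linarith)]; exact h1)
  have I4 := gen (1/25) (Real.pi/2 - 1/25) σ 1 hσ0 (by linarith) (bound_B n hn)
    (fun t _ _ => Real.abs_sin_le_one t)
  have I5 := gen (Real.pi/2 - 1/25) (Real.pi/2) ρ 1 hρ0 (by linarith) (bound_C n hn)
    (fun t _ _ => Real.abs_sin_le_one t)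
  have hsplit : ∫ t in (0:ℝ)..(Real.pi/2), f t = (∫ t in (0:ℝ)..b, f t) + (∫ t in b..(Real.pi / (4 * n)), f t)
      + (∫ t in (Real.pi / (4 * n))..(1/25), f t) + (∫ t in (1/25)..(Real.pi/2 - 1/25), f t)
      + ∫ t in (Real.pi/2 - 1/25)..(Real.pi/2), f t := by
    rw [intervalIntegral.integral_add_adjacent_intervals (hi _ _) (hi _ _),
      intervalIntegral.integral_add_adjacent_intervals (hi _ _) (hi _ _),
      intervalIntegral.integral_add_adjacent_intervals (hi _ _) (hi _ _),
      intervalIntegral.integral_add_adjacent_intervals (hi _ _) (hi _ _)]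
  have J3 : ρ * (1/25) * (1/25 - Real.pi / (4*n)) ≤ 0.0016 * ρ := by nlinarith
  have J4 : σ * 1 * (Real.pi/2 - 1/25 - 1/25) ≤ 0.004 * ρ := by
    calc σ * 1 * (Real.pi/2 - 1/25 - 1/25) ≤ σ * 1 * 1.6 := by gcongr; linarith
      _ ≤ _ := by linarith
  have J5 : ρ * 1 * (Real.pi/2 - (Real.pi/2 - 1/25)) = 0.04 * ρ := by ring
  have hb3 : b ^ 3 = 8 / r ^ 9 := by rw [hb]; field_simp; norm_num
  rw [hsplit, hpow]
  rw [hb3] at I1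
  set R := 1 / r ^ 9 with hR
  have hR0 : 0 < R := by positivity
  have E1 : 0.3 / r ^ 9 = 0.3 * R := by rw [hR]; ring
  have E2 : 8 / r ^ 9 = 8 * R := by rw [hR]; ring
  have E3 : 2 / r ^ 9 = 2 * R := by rw [hR]; ring
  rw [E1]; rw [E2] at I1; rw [E3] at hρ2
  linarith

end Helpers

/-- Almkvist's lower bound: for `n ≥ 83` and `(n−1)² ≤ 2k ≤ n²`, one has
`b_k(n) − b_{k−1}(n) ≥ C · 2^n / n^{9/2}` where `C = 3√3/(√2·π²)`. -/
theorem almkvist_middle_lower_bound (n k : ℕ) (hn : 83 ≤ n)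
    (hk1 : (n - 1) ^ 2 ≤ 2 * k) (hk2 : 2 * k ≤ n ^ 2) :
    ((distinctOddPartitions k n : ℝ) - (distinctOddPartitions (k - 1) n : ℝ)) ≥
      (3 * Real.sqrt 3 / (Real.sqrt 2 * Real.pi ^ 2)) *
        (2 : ℝ) ^ (n : ℕ) / (n : ℝ) ^ ((9 : ℝ) / 2) := by
  have hn' : (83:ℝ) ≤ n := by exact_mod_cast hn
  have hk : 1 ≤ k := by
    have : 82 ^ 2 ≤ (n - 1) ^ 2 := Nat.pow_le_pow_left (by omega) 2
    omega
  rw [dop_eq k n (by omega), dop_eq (k-1) n (by omega)]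
  have hd := diff_int k n hk
  have hk1' : ((n:ℝ) - 1) ^ 2 ≤ 2 * k := by
    have : (((n - 1 : ℕ) ^ 2 : ℕ) : ℝ) ≤ ((2 * k : ℕ) : ℝ) := by exact_mod_cast hk1
    push_cast [Nat.cast_sub (show 1 ≤ n by omega)] at this
    exact this
  have hk2' : 2 * (k:ℝ) ≤ (n:ℝ) ^ 2 := by exact_mod_cast hk2
  have hI := main_int n hn ((n:ℝ)^2 - 2 * k + 1) (by linarith) (by nlinarith)
  set I := ∫ t in (0:ℝ)..(Real.pi/2), W n t * (Real.sin (((n:ℝ)^2 - 2 * k + 1) * t) * Real.sin t)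
  have hp := Real.pi_gt_d2
  have hD : (cnt k n : ℝ) - cnt (k-1) n = 4 / Real.pi * 2 ^ n * I := by
    have hp0 : Real.pi ≠ 0 := by positivity
    field_simp
    rw [pow_succ] at hd
    linarith
  rw [ge_iff_le, hD]
  have hR : 0 < (n:ℝ) ^ ((9:ℝ)/2) := by positivity
  have hs : Real.sqrt 3 / Real.sqrt 2 ≤ 1.225 := by
    rw [← Real.sqrt_div (by norm_num)]
    apply Real.sqrt_le_iff.2
    norm_num
  have hC : 3 * Real.sqrt 3 / (Real.sqrt 2 * Real.pi ^ 2) ≤ 4 / Real.pi * 0.3 := by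
    have e : 3 * Real.sqrt 3 / (Real.sqrt 2 * Real.pi ^ 2)
        = (Real.sqrt 3 / Real.sqrt 2) * 3 / Real.pi ^ 2 := by field_simp
    rw [e, div_le_iff₀ (by positivity)]
    have e2 : 4 / Real.pi * 0.3 * Real.pi ^ 2 = 1.2 * Real.pi := by field_simp; norm_num
    rw [e2]; linarith
  calc 3 * Real.sqrt 3 / (Real.sqrt 2 * Real.pi ^ 2) * 2 ^ n / (n:ℝ) ^ ((9:ℝ)/2)
      ≤ (4 / Real.pi * 0.3) * 2 ^ n / (n:ℝ) ^ ((9:ℝ)/2) := by gcongr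
    _ = 4 / Real.pi * 2 ^ n * (0.3 / (n:ℝ) ^ ((9:ℝ)/2)) := by ring
    _ ≤ 4 / Real.pi * 2 ^ n * I := by gcongr
end

section
/- For every natural number n ≥ 8 and every k with 2 ≤ k and 2k ≤ n², one has (as real numbers) p_k(n,n) − p_{k−1}(n,n) ≥ C · 2^{√(2k)} / (2k)^{9/4}, where C = √(27/8)/π². -/
namespace SQ

/-- multisets of `l` naturals, each at most `m`, with sum `k` -/
def MS (l m k : ℕ) : Set (Multiset ℕ) :=
  {s | Multiset.card s = l ∧ (∀ i ∈ s, i ≤ m) ∧ s.sum = k}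

theorem rect_eq (k l m : ℕ) : rectPartitions k l m = (MS l m k).ncard := by
  unfold rectPartitions
  rw [← Nat.card_coe_set_eq]
  refine Nat.card_congr ⟨fun π => ⟨π.1.parts + Multiset.replicate (l - Multiset.card π.1.parts) 0, ?_⟩,
    fun s => ⟨⟨s.1.filter (· ≠ 0), ?_, ?_⟩, ?_, ?_⟩, ?_, ?_⟩
  · obtain ⟨π, h1, h2⟩ := π
    refine ⟨by simp; omega, ?_, ?_⟩
    · intro i hi
      rcases Multiset.mem_add.1 hi with h | h
      · exact h2 i h
      · rw [Multiset.eq_of_mem_replicate h]; exact Nat.zero_le _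
    · simp [π.parts_sum]
  · intro i hi
    have := (Multiset.mem_filter.1 hi).2
    omega
  · obtain ⟨s, h1, h2, h3⟩ := s
    have := Multiset.sum_filter_add_sum_filter_not (s := s) (p := (· ≠ 0))
    have h0 : (Multiset.filter (fun a => ¬ (a ≠ 0)) s).sum = 0 := by
      apply Multiset.sum_eq_zero
      intro x hx
      simpa using (Multiset.mem_filter.1 hx).2
    rw [h0, h3] at this
    simpa using this
  · obtain ⟨s, h1, h2, h3⟩ := s
    exact (Multiset.card_le_card (Multiset.filter_le _ s)).trans h1.le
  · obtain ⟨s, h1, h2, h3⟩ := s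
    intro i hi
    exact h2 i (Multiset.mem_filter.1 hi).1
  · rintro ⟨π, h1, h2⟩
    ext1
    ext1
    simp only [Multiset.filter_add]
    rw [Multiset.filter_eq_self.2, Multiset.filter_eq_nil.2]
    · simp
    · intro a ha; simpa using Multiset.eq_of_mem_replicate ha
    · intro a ha; exact (π.parts_pos ha).ne'
  · rintro ⟨s, h1, h2, h3⟩
    ext1
    simp only
    conv_rhs => rw [← Multiset.filter_add_not (· ≠ 0) s]
    congr 1
    symm
    rw [Multiset.eq_replicate]
    constructor
    · have := congrArg Multiset.card (Multiset.filter_add_not (· ≠ 0) s)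
      rw [Multiset.card_add] at this
      omega
    · intro b hb
      simpa using (Multiset.mem_filter.1 hb).2

theorem MS_rec (l m k : ℕ) : MS (l+1) (m+1) k =
    MS (l+1) m k ∪ {s | m + 1 ≤ k ∧ ∃ t ∈ MS l (m+1) (k-(m+1)), (m+1) ::ₘ t = s} := by
  ext s
  simp only [MS, Set.mem_ofPred_eq, Set.mem_union]
  constructor
  · rintro ⟨h1, h2, h3⟩
    by_cases hm : (m+1) ∈ s
    · right
      obtain ⟨t, rfl⟩ := Multiset.exists_cons_of_mem hm
      simp only [Multiset.card_cons, Multiset.sum_cons, Multiset.mem_cons] at h1 h2 h3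
      refine ⟨by omega, t, ⟨by omega, fun i hi => h2 i (Or.inr hi), by omega⟩, rfl⟩
    · left
      refine ⟨h1, fun i hi => ?_, h3⟩
      have := h2 i hi
      have : i ≠ m+1 := fun h => hm (h ▸ hi)
      omega
  · rintro (⟨h1, h2, h3⟩ | ⟨h, t, ⟨h1, h2, h3⟩, rfl⟩)
    · exact ⟨h1, fun i hi => (h2 i hi).trans (by omega), h3⟩
    · refine ⟨by simp [h1], ?_, by simp [h3]; omega⟩
      intro i hi
      rcases Multiset.mem_cons.1 hi with h | h
      · omega
      · exact h2 i h

theorem MS_zero_left (m k : ℕ) : MS 0 m k = if k = 0 then {0} else ∅ := by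
  ext s
  simp only [MS, Set.mem_ofPred_eq, Multiset.card_eq_zero]
  split_ifs with h
  · subst h
    simp only [Set.mem_singleton_iff]
    constructor
    · exact fun h => h.1
    · rintro rfl; simp
  · simp only [Set.mem_empty_iff_false, iff_false]
    rintro ⟨rfl, -, h3⟩
    exact h h3.symm

theorem MS_zero_right (l k : ℕ) : MS l 0 k = if k = 0 then {Multiset.replicate l 0} else ∅ := by
  ext s
  simp only [MS, Set.mem_ofPred_eq]
  have key : Multiset.card s = l ∧ (∀ i ∈ s, i ≤ 0) ↔ s = Multiset.replicate l 0 := by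
    rw [Multiset.eq_replicate]; simp
  rw [← and_assoc, key]
  split_ifs with h
  · subst h
    simp only [Set.mem_singleton_iff]
    constructor
    · exact fun h => h.1
    · rintro rfl; simp
  · simp only [Set.mem_empty_iff_false, iff_false]
    rintro ⟨rfl, h3⟩
    simp at h3
    exact h h3.symm

theorem MS_finite (l m k : ℕ) : (MS l m k).Finite := by
  induction l generalizing m k with
  | zero => rw [MS_zero_left]; split_ifs <;> simp
  | succ l ihl =>
    induction m generalizing k with
    | zero => rw [MS_zero_right]; split_ifs <;> simp
    | succ m ihm =>
      rw [MS_rec]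
      refine (ihm k).union (((ihl (m+1) (k-(m+1))).image (fun t => (m+1) ::ₘ t)).subset ?_)
      rintro s ⟨-, t, ht, rfl⟩
      exact ⟨t, ht, rfl⟩

open Polynomial

/-- Gaussian binomial `binom(l+m,m)_q`. -/
noncomputable def gb : ℕ → ℕ → ℤ[X]
  | 0, _ => 1
  | _+1, 0 => 1
  | l+1, m+1 => gb (l+1) m + X^(m+1) * gb l (m+1)

theorem gb_zero_left (m) : gb 0 m = 1 := by rw [gb]
theorem gb_zero_right (l) : gb l 0 = 1 := by cases l <;> rw [gb]
theorem gb_rec (l m) : gb (l+1) (m+1) = gb (l+1) m + X^(m+1) * gb l (m+1) := by rw [gb]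

theorem gb_coeff (l m k : ℕ) : (gb l m).coeff k = (MS l m k).ncard := by
  induction l generalizing m k with
  | zero => rw [MS_zero_left, gb_zero_left, coeff_one]; split_ifs <;> simp
  | succ l ihl =>
    induction m generalizing k with
    | zero => rw [MS_zero_right, gb_zero_right, coeff_one]; split_ifs <;> simp
    | succ m ihm =>
      have hfin : {s | m + 1 ≤ k ∧ ∃ t ∈ MS l (m+1) (k-(m+1)), (m+1) ::ₘ t = s}.Finite := by
        refine (((MS_finite l (m+1) (k-(m+1))).image (fun t => (m+1) ::ₘ t)).subset ?_)
        rintro s ⟨-, t, ht, rfl⟩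
        exact ⟨t, ht, rfl⟩
      rw [gb_rec, MS_rec, coeff_add, ihm, coeff_X_pow_mul', ihl, Set.ncard_union_eq _ (MS_finite _ _ _) hfin]
      · push_cast
        congr 1
        split_ifs with h
        · simp only [h, true_and]
          norm_cast
          symm
          apply Set.ncard_image_of_injective (f := fun t => (m+1) ::ₘ t)
          intro a b hab
          simpa using hab
        · simp [h]
      · rw [Set.disjoint_left]
        rintro s ⟨-, h2, -⟩ ⟨-, t, -, rfl⟩
        have := h2 (m+1) (by simp)
        omega

theorem rect_coeff (k l m : ℕ) : (rectPartitions k l m : ℤ) = (gb l m).coeff k := by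
  rw [rect_eq, gb_coeff]

end SQ

namespace SQ

section Sylvester
open MvPolynomial

/-- the monomial attached to a multiset -/
noncomputable def mon (s : Multiset ℕ) : MvPolynomial ℕ ℚ := (s.map X).prod

theorem mon_cons (a : ℕ) (s : Multiset ℕ) : mon (a ::ₘ s) = X a * mon s := by simp [mon]

theorem mon_eq (s : Multiset ℕ) : mon s = monomial (Multiset.toFinsupp s) 1 := by
  induction s using Multiset.induction_on with
  | empty => simp [mon]
  | cons a s ih =>
    rw [mon_cons, ih, ← Multiset.singleton_add, map_add, Multiset.toFinsupp_singleton, X,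
      monomial_mul, one_mul]

/-- weight space -/
noncomputable def V (l m k : ℕ) : Submodule ℚ (MvPolynomial ℕ ℚ) :=
  Submodule.span ℚ (Set.image mon (MS l m k))

theorem V_eq (l m k : ℕ) : V l m k = restrictSupport ℚ (Set.image Multiset.toFinsupp (MS l m k)) := by
  rw [V, restrictSupport_eq_span, Set.image_image]
  congr 1
  apply Set.image_congr
  intro s _
  exact mon_eq s

theorem V_finite (l m k : ℕ) : Module.Finite ℚ (V l m k) := by
  have := (MS_finite l m k).image mon
  exact Module.Finite.span_of_finite ℚ this

theorem V_finrank (l m k : ℕ) : Module.finrank ℚ (V l m k) = (MS l m k).ncard := by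
  rw [V_eq, Module.finrank_eq_nat_card_basis (basisRestrictSupport ℚ _), Nat.card_coe_set_eq,
    Set.ncard_image_of_injective]
  exact Multiset.toFinsupp.injective

theorem X_mul_V {l m k a : ℕ} (ha : a ≤ m) {v} (hv : v ∈ V l m k) :
    X a * v ∈ V (l+1) m (k+a) := by
  induction hv using Submodule.span_induction with
  | mem x hx =>
    obtain ⟨s, ⟨h1, h2, h3⟩, rfl⟩ := hx
    rw [← mon_cons]
    apply Submodule.subset_span
    refine ⟨_, ⟨by simp [h1], ?_, by simp [h3]; omega⟩, rfl⟩
    intro i hi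
    rcases Multiset.mem_cons.1 hi with h | h
    · omega
    · exact h2 i h
  | zero => simp
  | add x y _ _ hx hy => rw [mul_add]; exact add_mem hx hy
  | smul c x _ hx => rw [mul_smul_comm]; exact Submodule.smul_mem _ _ hx

/-- raising operator -/
noncomputable def U (m : ℕ) : Derivation ℚ (MvPolynomial ℕ ℚ) (MvPolynomial ℕ ℚ) :=
  mkDerivation ℚ (fun i => ((m : ℚ) - i) • X (i+1))

/-- lowering operator -/
noncomputable def D : Derivation ℚ (MvPolynomial ℕ ℚ) (MvPolynomial ℕ ℚ) :=
  mkDerivation ℚ (fun i => (i : ℚ) • X (i-1))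

/-- weight operator -/
noncomputable def H (m : ℕ) : Derivation ℚ (MvPolynomial ℕ ℚ) (MvPolynomial ℕ ℚ) :=
  mkDerivation ℚ (fun i => ((m : ℚ) - 2 * i) • X i)

theorem comm (m : ℕ) (v) : U m (D v) = D (U m v) - H m v := by
  have h : ⁅D, U m⁆ = H m := by
    apply derivation_ext
    intro i
    rw [Derivation.commutator_apply]
    simp only [D, U, H, mkDerivation_X, Derivation.map_smul]
    rcases i with _ | i
    · simp
    · simp only [Nat.add_sub_cancel, smul_smul, ← sub_smul]
      congr 1
      push_cast
      ring
  rw [← h, Derivation.commutator_apply]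
  abel

theorem H_mon (m : ℕ) (s : Multiset ℕ) :
    H m (mon s) = ((m : ℚ) * Multiset.card s - 2 * s.sum) • mon s := by
  induction s using Multiset.induction_on with
  | empty => simp [mon]
  | cons a s ih =>
    rw [mon_cons, Derivation.leibniz, ih]
    simp only [H, mkDerivation_X, smul_eq_mul, mul_smul_comm, Multiset.card_cons, Multiset.sum_cons]
    rw [mul_comm (mon s), ← add_smul]
    congr 1
    push_cast
    ring

theorem H_V {l m k : ℕ} {v} (hv : v ∈ V l m k) : H m v = ((m : ℚ) * l - 2 * k) • v := by
  induction hv using Submodule.span_induction with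
  | mem x hx =>
    obtain ⟨s, ⟨h1, h2, h3⟩, rfl⟩ := hx
    rw [H_mon, h1, h3]
  | zero => simp
  | add x y _ _ hx hy => rw [map_add, hx, hy, smul_add]
  | smul c x _ hx => rw [Derivation.map_smul, hx, smul_comm]

theorem U_mon (m : ℕ) (s : Multiset ℕ) (h : ∀ i ∈ s, i ≤ m) :
    U m (mon s) ∈ V (Multiset.card s) m (s.sum + 1) := by
  induction s using Multiset.induction_on with
  | empty => simp [mon]
  | cons a s ih =>
    have hs : ∀ i ∈ s, i ≤ m := fun i hi => h i (Multiset.mem_cons_of_mem hi)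
    have ha : a ≤ m := h a (Multiset.mem_cons_self a s)
    have hms : mon s ∈ V (Multiset.card s) m s.sum :=
      Submodule.subset_span ⟨s, ⟨rfl, hs, rfl⟩, rfl⟩
    rw [mon_cons, Derivation.leibniz]
    simp only [Multiset.card_cons, Multiset.sum_cons, smul_eq_mul]
    apply add_mem
    · have := X_mul_V ha (ih hs)
      rwa [show s.sum + 1 + a = a + s.sum + 1 by ring] at this
    · rw [U, mkDerivation_X, mul_smul_comm]
      rcases ha.lt_or_eq with h | h
      · apply Submodule.smul_mem
        have := X_mul_V (show a + 1 ≤ m from h) hms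
        rwa [show s.sum + (a + 1) = a + s.sum + 1 by ring, mul_comm] at this
      · simp [h]

theorem D_mon (m : ℕ) (s : Multiset ℕ) (h : ∀ i ∈ s, i ≤ m) :
    (s.sum = 0 → D (mon s) = 0) ∧ ∀ j, s.sum = j + 1 → D (mon s) ∈ V (Multiset.card s) m j := by
  induction s using Multiset.induction_on with
  | empty => simp [mon]
  | cons a s ih =>
    have hs : ∀ i ∈ s, i ≤ m := fun i hi => h i (Multiset.mem_cons_of_mem hi)
    have ha : a ≤ m := h a (Multiset.mem_cons_self a s)
    have hms : mon s ∈ V (Multiset.card s) m s.sum :=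
      Submodule.subset_span ⟨s, ⟨rfl, hs, rfl⟩, rfl⟩
    rw [mon_cons, Derivation.leibniz]
    simp only [Multiset.card_cons, Multiset.sum_cons, smul_eq_mul]
    constructor
    · intro h0
      rw [(ih hs).1 (by omega), D, mkDerivation_X, show a = 0 by omega]
      simp
    · intro j hj
      apply add_mem
      · rcases Nat.eq_zero_or_pos s.sum with h0 | h0
        · rw [(ih hs).1 h0]; simp
        · have := X_mul_V ha ((ih hs).2 (s.sum - 1) (by omega))
          rwa [show s.sum - 1 + a = j by omega] at this
      · rw [D, mkDerivation_X, mul_smul_comm]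
        rcases Nat.eq_zero_or_pos a with h | h
        · simp [h]
        · apply Submodule.smul_mem
          have := X_mul_V (show a - 1 ≤ m by omega) hms
          rwa [show s.sum + (a - 1) = j by omega, mul_comm] at this

theorem U_V {l m k : ℕ} {v} (hv : v ∈ V l m k) : U m v ∈ V l m (k+1) := by
  induction hv using Submodule.span_induction with
  | mem x hx =>
    obtain ⟨s, ⟨h1, h2, h3⟩, rfl⟩ := hx
    rw [← h1, ← h3]
    exact U_mon m s h2
  | zero => simp
  | add x y _ _ hx hy => rw [map_add]; exact add_mem hx hy
  | smul c x _ hx => rw [Derivation.map_smul]; exact Submodule.smul_mem _ _ hx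

theorem D_V {l m k : ℕ} {v} (hv : v ∈ V l m (k+1)) : D v ∈ V l m k := by
  induction hv using Submodule.span_induction with
  | mem x hx =>
    obtain ⟨s, ⟨h1, h2, h3⟩, rfl⟩ := hx
    rw [← h1]
    exact (D_mon m s h2).2 _ h3
  | zero => simp
  | add x y _ _ hx hy => rw [map_add]; exact add_mem hx hy
  | smul c x _ hx => rw [Derivation.map_smul]; exact Submodule.smul_mem _ _ hx

theorem D_V0 {l m : ℕ} {v} (hv : v ∈ V l m 0) : D v = 0 := by
  induction hv using Submodule.span_induction with
  | mem x hx =>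
    obtain ⟨s, ⟨h1, h2, h3⟩, rfl⟩ := hx
    exact (D_mon m s h2).1 h3
  | zero => simp
  | add x y _ _ hx hy => rw [map_add, hx, hy, add_zero]
  | smul c x _ hx => rw [Derivation.map_smul, hx, smul_zero]

theorem D_iter {l m k : ℕ} {v} (hv : v ∈ V l m k) (r : ℕ) :
    (r ≤ k → D^[r] v ∈ V l m (k - r)) ∧ (k < r → D^[r] v = 0) := by
  induction r with
  | zero => simpa using hv
  | succ r ih =>
    rw [Function.iterate_succ_apply']
    constructor
    · intro h
      apply D_V
      rw [show k - (r+1) + 1 = k - r by omega]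
      exact ih.1 (by omega)
    · intro h
      rcases Nat.lt_or_ge k r with h' | h'
      · rw [ih.2 h', map_zero]
      · apply D_V0 (l := l) (m := m)
        have := ih.1 h'
        rwa [show k - r = 0 by omega] at this

theorem H_iter {l m k : ℕ} {v} (hv : v ∈ V l m k) (r : ℕ) :
    H m (D^[r] v) = ((m : ℚ) * l - 2 * k + 2 * r) • D^[r] v := by
  rcases Nat.lt_or_ge k r with h | h
  · rw [(D_iter hv r).2 h]; simp
  · rw [H_V ((D_iter hv r).1 h)]
    congr 1
    push_cast [h]
    ring

theorem U_iter {l m k : ℕ} {v} (hv : v ∈ V l m k) (h0 : U m v = 0) (r : ℕ) :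
    U m (D^[r+1] v) = (-((r + 1 : ℚ) * ((m : ℚ) * l - 2 * k + r))) • D^[r] v := by
  induction r with
  | zero =>
    have := H_iter hv 0
    simp only [Function.iterate_zero, id] at this
    simp only [zero_add, Function.iterate_one, Function.iterate_zero, id]
    rw [comm, h0, map_zero, this, zero_sub, ← neg_smul]
    congr 1
    push_cast
    ring
  | succ r ih =>
    rw [Function.iterate_succ_apply', comm, ih, Derivation.map_smul, ← Function.iterate_succ_apply' (⇑D) r v,
      H_iter hv, ← sub_smul]
    congr 1
    push_cast
    ring

theorem U_inj {l m k : ℕ} (hk : 2 * k < m * l) {v} (hv : v ∈ V l m k) (h0 : U m v = 0) :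
    v = 0 := by
  have key : ∀ r, D^[r] v = 0 → v = 0 := by
    intro r
    induction r with
    | zero => simp
    | succ r ih =>
      intro h
      apply ih
      have := U_iter hv h0 r
      rw [h, map_zero] at this
      rcases smul_eq_zero.1 this.symm with h | h
      · exfalso
        have : (2 * k : ℚ) < m * l := by exact_mod_cast hk
        have h1 : (0:ℚ) < (r + 1 : ℚ) * ((m : ℚ) * l - 2 * k + r) := by
          apply mul_pos
          · positivity
          · have : (0:ℚ) ≤ r := by positivity
            linarith
        linarith
      · exact h
  exact key (k+1) ((D_iter hv (k+1)).2 (by omega))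

theorem sylvester {l m k : ℕ} (hk : 2 * k < m * l) : (MS l m k).ncard ≤ (MS l m (k+1)).ncard := by
  rw [← V_finrank, ← V_finrank]
  have := V_finite l m (k+1)
  let f : V l m k →ₗ[ℚ] V l m (k+1) := (U m).toLinearMap.restrict (fun v hv => U_V hv)
  apply LinearMap.finrank_le_finrank_of_injective (f := f)
  rw [← LinearMap.ker_eq_bot, LinearMap.ker_eq_bot']
  rintro ⟨v, hv⟩ h
  have h' : U m v = 0 := congrArg Subtype.val h
  ext1
  exact U_inj hk hv h'

end Sylvester

theorem sylvester' {l m k : ℕ} (hk : 2 * k < m * l) :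
    (gb l m).coeff k ≤ (gb l m).coeff (k+1) := by
  rw [gb_coeff, gb_coeff]
  exact_mod_cast sylvester hk

end SQ

namespace SQ
open Polynomial

/-- product formula -/
theorem gb_prod (l m : ℕ) : gb l m * ∏ i ∈ Finset.range m, (1 - (X:ℤ[X])^(i+1)) =
    ∏ i ∈ Finset.range m, (1 - X^(l+i+1)) := by
  induction l generalizing m with
  | zero => simp [gb_zero_left]
  | succ l ihl =>
    induction m with
    | zero => simp [gb_zero_right]
    | succ m ihm =>
      have h := ihl (m+1)
      rw [gb_rec, add_mul, mul_assoc, h, Finset.prod_range_succ, ← mul_assoc, ihm,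
        Finset.prod_range_succ', Finset.prod_range_succ]
      have e : ∏ i ∈ Finset.range m, (1 - (X:ℤ[X])^(l+(i+1)+1)) =
          ∏ i ∈ Finset.range m, (1 - X^(l+1+i+1)) := by
        apply Finset.prod_congr rfl
        intro i _
        rw [show l+(i+1)+1 = l+1+i+1 by ring]
      rw [e]
      ring

theorem prod_ne_zero (m : ℕ) : ∏ i ∈ Finset.range m, (1 - (X:ℤ[X])^(i+1)) ≠ 0 := by
  rw [Finset.prod_ne_zero_iff]
  intro i _ h
  have := congrArg (Polynomial.eval 0) h
  simp at this

theorem gb_symm (l m : ℕ) : gb l m = gb m l := by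
  have key : ∀ l m, gb l m * (∏ i ∈ Finset.range m, (1 - (X:ℤ[X])^(i+1))) *
      (∏ i ∈ Finset.range l, (1 - (X:ℤ[X])^(i+1))) =
      ∏ i ∈ Finset.range (l+m), (1 - (X:ℤ[X])^(i+1)) := by
    intro l m
    rw [gb_prod, Finset.prod_range_add, mul_comm]
  have h1 := key l m
  have h2 := key m l
  rw [add_comm m l, ← h1] at h2
  have hl := prod_ne_zero l
  have hm := prod_ne_zero m
  apply mul_right_cancel₀ hm
  apply mul_right_cancel₀ hl
  rw [← h2]
  ring

theorem gb_coeff_zero (l m : ℕ) : (gb l m).coeff 0 = 1 := by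
  induction l generalizing m with
  | zero => simp [gb_zero_left]
  | succ l _ =>
    induction m with
    | zero => simp [gb_zero_right]
    | succ m ihm => rw [gb_rec]; simp [ihm]

/-- first difference of the coefficients -/
noncomputable def dl (l m k : ℕ) : ℤ := (gb l m).coeff (k+1) - (gb l m).coeff k

theorem dl_symm (l m k : ℕ) : dl l m k = dl m l k := by rw [dl, dl, gb_symm]

theorem dl_step (l m k : ℕ) (h : 2 * (k+1) ≤ (l+1) * (m+1)) : dl l m k ≤ dl l (m+1) k := by
  rcases l with _ | l
  · simp [dl, gb_zero_left]
  · unfold dl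
    rw [gb_rec, coeff_add, coeff_add, coeff_X_pow_mul', coeff_X_pow_mul']
    split_ifs with h1 h2 h2
    · have := sylvester' (l := l) (m := m+1) (k := k - (m+1)) (by
        zify [h2] at h ⊢
        nlinarith)
      rw [show k - (m+1) + 1 = k + 1 - (m+1) by omega] at this
      linarith
    · have : k + 1 - (m+1) = 0 := by omega
      rw [this, gb_coeff_zero]
      linarith
    · omega
    · linarith

theorem dl_mono (m n k : ℕ) (hmn : m ≤ n) (h : 2 * (k+1) ≤ m * m) : dl m m k ≤ dl n n k := by
  induction n, hmn using Nat.le_induction with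
  | base => exact le_rfl
  | succ n hn ih =>
    have hh : m * m ≤ n * n := Nat.mul_le_mul hn hn
    refine ih.trans ((dl_step n n k (by nlinarith)).trans ?_)
    rw [dl_symm n (n+1), ]
    exact dl_step (n+1) n k (by nlinarith)

end SQ

namespace SQ
open Polynomial

/-- value of the Gaussian binomial at a complex number -/
noncomputable def gv (l m : ℕ) (q : ℂ) : ℂ := (gb l m).eval₂ (Int.castRingHom ℂ) q

theorem gv_rec (l m : ℕ) (q : ℂ) : gv (l+1) (m+1) q = gv l (m+1) q + q^(l+1) * gv (l+1) m q := by
  unfold gv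
  rw [gb_symm, gb_rec, gb_symm (m+1) l, gb_symm m (l+1)]
  simp [eval₂_add, eval₂_mul, eval₂_pow]

/-- `∏ (1 + q^i X)` -/
noncomputable def PP (q : ℂ) (N : ℕ) : ℂ[X] := ∏ i ∈ Finset.range N, (1 + C (q^i) * X)

theorem PP_succ (q : ℂ) (N : ℕ) : PP q (N+1) = PP q N * (1 + C (q^N) * X) := by
  rw [PP, Finset.prod_range_succ, PP]

theorem PP_coeff_zero (q : ℂ) (N : ℕ) : (PP q N).coeff 0 = 1 := by
  induction N with
  | zero => simp [PP]
  | succ N ih => rw [PP_succ, mul_coeff_zero, ih]; simp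

theorem PP_coeff_succ (q : ℂ) (N j : ℕ) :
    (PP q (N+1)).coeff (j+1) = (PP q N).coeff (j+1) + q^N * (PP q N).coeff j := by
  rw [PP_succ, mul_add, mul_one, coeff_add, ← mul_assoc, coeff_mul_X, mul_comm, coeff_C_mul]

theorem PP_coeff_big (q : ℂ) (N j : ℕ) (h : N < j) : (PP q N).coeff j = 0 := by
  induction N generalizing j with
  | zero =>
    simp only [PP, Finset.range_zero, Finset.prod_empty, coeff_one]
    rw [if_neg (by omega)]
  | succ N ih =>
    rcases j with _ | j
    · omega
    · rw [PP_coeff_succ, ih _ (by omega), ih _ (by omega)]; simp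

theorem PP_coeff (q : ℂ) (N l m : ℕ) (h : l + m = N) :
    (PP q N).coeff m = q^(m.choose 2) * gv l m q := by
  induction N generalizing l m with
  | zero =>
    obtain rfl : l = 0 := by omega
    obtain rfl : m = 0 := by omega
    simp [PP, gv, gb_zero_left]
  | succ N ih =>
    rcases m with _ | m
    · rw [PP_coeff_zero]; simp [gv, gb_zero_right]
    · rw [PP_coeff_succ, ih l m (by omega)]
      have hc : (m+1).choose 2 = m + m.choose 2 := by
        rw [Nat.choose_succ_succ' m 1, Nat.choose_one_right]
      rcases l with _ | l
      · rw [PP_coeff_big _ _ _ (by omega)]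
        obtain rfl : m = N := by omega
        simp [gv, gb_zero_left, hc, pow_add]
      · rw [ih l (m+1) (by omega), gv_rec, hc]
        obtain rfl : N = l + 1 + m := by omega
        ring

theorem coeff_le_of_circle (p : ℂ[X]) (B : ℝ) (hB : 0 ≤ B) (h : ∀ z : ℂ, ‖z‖ = 1 → ‖p.eval z‖^2 ≤ B^2)
    (j : ℕ) : ‖p.coeff j‖ ≤ B := by
  have h1 := p.sum_sq_norm_coeff_eq_circleAverage
  have h2 : Real.circleAverage (fun z => ‖p.eval z‖^2) 0 1 ≤ B^2 := by
    apply Real.circleAverage_mono_on_of_le_circle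
    · apply ContinuousOn.circleIntegrable'
      fun_prop
    · intro z hz
      apply h
      simpa using hz
  have h3 : ‖p.coeff j‖^2 ≤ B^2 := by
    refine le_trans ?_ (h1.le.trans h2)
    by_cases hj : j ∈ p.support
    · exact Finset.single_le_sum (f := fun i => ‖p.coeff i‖^2) (fun i _ => by positivity) hj
    · rw [notMem_support_iff.1 hj]
      simp
      positivity
  exact abs_le_of_sq_le_sq' h3 hB |>.2

theorem prod_le_of_sum (N : ℕ) (x : ℕ → ℝ) (hx : ∀ i, 0 ≤ x i) (A : ℝ) (hA : 0 < A)
    (h : ∑ i ∈ Finset.range N, x i ≤ N * A) : ∏ i ∈ Finset.range N, x i ≤ A^N := by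
  have h1 : ∏ i ∈ Finset.range N, x i ≤ ∏ i ∈ Finset.range N, (A * Real.exp (x i / A - 1)) := by
    apply Finset.prod_le_prod
    · intro i _; exact hx i
    · intro i _
      have := Real.add_one_le_exp (x i / A - 1)
      calc x i = A * (x i / A - 1 + 1) := by field_simp; ring
        _ ≤ _ := by gcongr
  refine h1.trans ?_
  rw [Finset.prod_mul_distrib, Finset.prod_const, Finset.card_range, ← Real.exp_sum,
    Finset.sum_sub_distrib, ← Finset.sum_div]
  have : Real.exp ((∑ i ∈ Finset.range N, x i) / A - ∑ i ∈ Finset.range N, 1) ≤ 1 := by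
    rw [Real.exp_le_one_iff]
    simp only [Finset.sum_const, Finset.card_range, nsmul_eq_mul, mul_one]
    rw [sub_nonpos, div_le_iff₀ hA]
    exact h
  nlinarith [pow_pos hA N]

theorem gv_upper (n : ℕ) (q : ℂ) (hq : ‖q‖ = 1) (hq1 : 2 ≤ n * ‖q - 1‖) :
    ‖gv n n q‖ ≤ 3^n := by
  have h := coeff_le_of_circle (PP q (n+n)) (3^n) (by positivity) ?_ n
  · rw [PP_coeff q (n+n) n n rfl, norm_mul, norm_pow, hq] at h
    simpa using h
  intro z hz
  rw [PP, eval_prod, norm_prod, ← Finset.prod_pow]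
  simp only [eval_add, eval_one, eval_mul, eval_C, eval_X]
  have hsum : ∑ i ∈ Finset.range (n+n), ‖1 + q^i * z‖^2 ≤ ((n+n : ℕ) : ℝ) * 3 := by
    have e : ∀ i, ‖1 + q^i * z‖^2 = 2 + 2 * (q^i * z).re := by
      intro i
      have h1 : ‖q^i * z‖^2 = 1 := by rw [norm_mul, norm_pow, hq, hz]; simp
      generalize q^i * z = w at h1 ⊢
      rw [← Complex.normSq_eq_norm_sq] at h1 ⊢
      rw [Complex.normSq_add]
      simp [h1]
      ring
    simp only [e]
    rw [Finset.sum_add_distrib, ← Finset.mul_sum, ← Complex.re_sum, ← Finset.sum_mul]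
    have hpos : 0 < ‖q - 1‖ := by
      by_contra hc
      have : ‖q - 1‖ = 0 := le_antisymm (not_lt.1 hc) (norm_nonneg _)
      rw [this] at hq1
      norm_num at hq1
    have hne : q ≠ 1 := by
      rintro rfl; simp at hpos
    have hb : ((∑ i ∈ Finset.range (n+n), q^i) * z).re ≤ n := by
      refine (Complex.re_le_norm _).trans ?_
      rw [norm_mul, hz, mul_one, geom_sum_eq hne, norm_div, div_le_iff₀ hpos]
      refine le_trans ?_ hq1
      refine (norm_sub_le _ _).trans ?_
      rw [norm_pow, hq]
      norm_num
    simp only [Finset.sum_const, Finset.card_range, nsmul_eq_mul]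
    push_cast
    linarith
  have := prod_le_of_sum (n+n) (fun i => ‖1 + q^i * z‖^2) (fun i => by positivity) 3 (by norm_num) hsum
  refine this.trans (le_of_eq ?_)
  ring

end SQ

namespace SQ
open Polynomial

/-- `exp (2 i θ)` -/
noncomputable def qq (θ : ℝ) : ℂ := Complex.exp (2 * θ * Complex.I)

/-- integrand -/
noncomputable def hh (Q : ℤ[X]) (K : ℕ) (θ : ℝ) : ℝ :=
  (Q.eval₂ (Int.castRingHom ℂ) (qq θ) * Complex.exp (-(2 * K * θ * Complex.I))).re

theorem hh_eq (Q : ℤ[X]) (K : ℕ) (θ : ℝ) :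
    hh Q K θ = ∑ j ∈ Q.support, (Q.coeff j : ℝ) * Real.cos (2 * ((j:ℝ) - K) * θ) := by
  unfold hh
  rw [eval₂_eq_sum, Polynomial.sum, Finset.sum_mul, Complex.re_sum]
  apply Finset.sum_congr rfl
  intro j _
  rw [mul_assoc, qq, ← Complex.exp_nat_mul, ← Complex.exp_add]
  have : (j : ℂ) * (2 * θ * Complex.I) + -(2 * K * θ * Complex.I) =
    ((2 * ((j:ℝ) - K) * θ : ℝ) : ℂ) * Complex.I := by push_cast; ring
  rw [this]
  have h2 : (Int.castRingHom ℂ) (Q.coeff j) = ((Q.coeff j : ℝ) : ℂ) := by simp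
  rw [h2, Complex.re_ofReal_mul, Complex.exp_ofReal_mul_I_re]

theorem hh_cont (Q : ℤ[X]) (K : ℕ) : Continuous (hh Q K) := by
  have : hh Q K = fun θ => ∑ j ∈ Q.support, (Q.coeff j : ℝ) * Real.cos (2 * ((j:ℝ) - K) * θ) :=
    funext (hh_eq Q K)
  rw [this]
  fun_prop

theorem int_cos (r : ℤ) : ∫ θ in (0:ℝ)..(Real.pi/2), Real.cos (2 * (r:ℝ) * θ) =
    if r = 0 then Real.pi / 2 else 0 := by
  split_ifs with h
  · simp [h]
  · have hr : (2 * (r:ℝ)) ≠ 0 := by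
      have : (r:ℝ) ≠ 0 := by exact_mod_cast h
      positivity
    rw [intervalIntegral.integral_comp_mul_left (fun x => Real.cos x) hr, integral_cos]
    rw [show 2 * (r:ℝ) * (Real.pi/2) = r * Real.pi by ring, Real.sin_int_mul_pi]
    simp

theorem int_hh (Q : ℤ[X]) (K : ℕ) :
    ∫ θ in (0:ℝ)..(Real.pi/2), hh Q K θ = Real.pi / 2 * Q.coeff K := by
  simp only [hh_eq]
  rw [intervalIntegral.integral_finsetSum]
  · have : ∀ j ∈ Q.support, ∫ θ in (0:ℝ)..(Real.pi/2), (Q.coeff j : ℝ) * Real.cos (2 * ((j:ℝ) - K) * θ)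
        = if j = K then Real.pi / 2 * Q.coeff K else 0 := by
      intro j _
      rw [intervalIntegral.integral_const_mul]
      have := int_cos ((j:ℤ) - K)
      push_cast at this
      rw [this]
      by_cases h : j = K
      · simp [h, mul_comm]
      · rw [if_neg h, if_neg (by omega), mul_zero]
    rw [Finset.sum_congr rfl this, Finset.sum_ite_eq']
    split_ifs with h
    · rfl
    · rw [notMem_support_iff.1 h]; simp
  · intro j _
    apply Continuous.intervalIntegrable
    fun_prop

theorem one_sub_exp (x : ℝ) : 1 - Complex.exp (2 * x * Complex.I) =
    -2 * Complex.I * Complex.exp (x * Complex.I) * (Real.sin x : ℂ) := by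
  rw [show 2 * (x:ℂ) * Complex.I = x * Complex.I + x * Complex.I by ring, Complex.exp_add,
    Complex.ofReal_sin, Complex.sin]
  have h : Complex.exp (x * Complex.I) * Complex.exp (-x * Complex.I) = 1 := by
    rw [← Complex.exp_add]; simp
  linear_combination (-1 : ℂ) * h + (Complex.exp (x * Complex.I) * Complex.exp (-x * Complex.I) - Complex.exp (x * Complex.I)^2) * (Complex.I_sq)

theorem one_sub_qq_pow (θ : ℝ) (a : ℕ) : 1 - (qq θ)^a =
    -2 * Complex.I * Complex.exp (θ * Complex.I)^a * (Real.sin (a * θ) : ℂ) := by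
  have := one_sub_exp (a * θ)
  rw [qq, ← Complex.exp_nat_mul, ← Complex.exp_nat_mul]
  push_cast at this ⊢
  rw [show (a:ℂ) * (2 * θ * Complex.I) = 2 * (a * θ) * Complex.I by ring, this,
    show (a:ℂ) * (θ * Complex.I) = a * θ * Complex.I by ring]

theorem gv_formula (n : ℕ) (θ : ℝ) :
    gv n n (qq θ) * ∏ i ∈ Finset.range n, (Real.sin ((i+1:ℕ) * θ) : ℂ) =
    Complex.exp (θ * Complex.I)^(n*n) * ∏ i ∈ Finset.range n, (Real.sin ((n+i+1:ℕ) * θ) : ℂ) := by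
  have h := congrArg (eval₂ (Int.castRingHom ℂ) (qq θ)) (gb_prod n n)
  rw [eval₂_mul, eval₂_finsetProd, eval₂_finsetProd] at h
  simp only [eval₂_sub, eval₂_one, eval₂_pow, eval₂_X, one_sub_qq_pow] at h
  have hE := Complex.exp_ne_zero (θ * Complex.I)
  set E := Complex.exp (θ * Complex.I)
  simp only [Finset.prod_mul_distrib] at h
  have h2 : ∏ i ∈ Finset.range n, E^(n+i+1) = E^(n*n) * ∏ i ∈ Finset.range n, E^(i+1) := by
    simp only [show ∀ i, n + i + 1 = n + (i+1) from fun i => by ring, pow_add E n]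
    rw [Finset.prod_mul_distrib, Finset.prod_const, Finset.card_range, ← pow_mul]
  rw [h2] at h
  have hne : (∏ i ∈ Finset.range n, (-2:ℂ)) * (∏ i ∈ Finset.range n, Complex.I) *
      ∏ i ∈ Finset.range n, E^(i+1) ≠ 0 := by
    simp only [ne_eq, mul_eq_zero, not_or]
    refine ⟨⟨?_, ?_⟩, ?_⟩
    · simp
    · simp
    · rw [Finset.prod_eq_zero_iff]
      rintro ⟨i, -, hi⟩
      exact pow_ne_zero _ hE hi
  apply mul_left_cancel₀ hne
  unfold gv
  linear_combination h

/-- real product -/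
noncomputable def RR (n : ℕ) (θ : ℝ) : ℝ :=
  ∏ i ∈ Finset.range n, (Real.sin ((n+i+1:ℕ) * θ) / Real.sin ((i+1:ℕ) * θ))

theorem hh_formula (n K : ℕ) (θ : ℝ) (h0 : ∀ i < n, Real.sin ((i+1:ℕ) * θ) ≠ 0) :
    hh ((1 - X) * gb n n) K θ =
      2 * RR n θ * Real.sin θ * Real.sin (((n:ℝ)^2 + 1 - 2 * K) * θ) := by
  have h1 := gv_formula n θ
  have hne : ∏ i ∈ Finset.range n, (Real.sin ((i+1:ℕ) * θ) : ℂ) ≠ 0 := by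
    rw [Finset.prod_ne_zero_iff]
    intro i hi
    exact_mod_cast h0 i (Finset.mem_range.1 hi)
  have h2 : gv n n (qq θ) = Complex.exp (θ * Complex.I)^(n*n) * (RR n θ : ℂ) := by
    rw [RR, Complex.ofReal_prod]
    simp only [Complex.ofReal_div]
    rw [Finset.prod_div_distrib, ← mul_div_assoc, eq_div_iff hne, h1]
  unfold hh
  rw [eval₂_mul]
  have h3 : eval₂ (Int.castRingHom ℂ) (qq θ) (1 - X) =
    -2 * Complex.I * Complex.exp (θ * Complex.I) * (Real.sin θ : ℂ) := by
    have := one_sub_qq_pow θ 1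
    simpa using this
  have h4 : eval₂ (Int.castRingHom ℂ) (qq θ) (gb n n) = gv n n (qq θ) := rfl
  rw [h3, h4, h2, ← Complex.exp_nat_mul]
  have h5 : -2 * Complex.I * Complex.exp (θ * Complex.I) * (Real.sin θ : ℂ) *
      (Complex.exp (((n*n : ℕ):ℂ) * (θ * Complex.I)) * (RR n θ : ℂ)) * Complex.exp (-(2 * K * θ * Complex.I))
      = ((2 * RR n θ * Real.sin θ : ℝ) : ℂ) *
        (-Complex.I * Complex.exp (((((n:ℝ)^2 + 1 - 2 * K) * θ : ℝ) : ℂ) * Complex.I)) := by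
    have : Complex.exp (((((n:ℝ)^2 + 1 - 2 * K) * θ : ℝ) : ℂ) * Complex.I) =
      Complex.exp (θ * Complex.I) * Complex.exp (((n*n : ℕ):ℂ) * (θ * Complex.I)) *
        Complex.exp (-(2 * K * θ * Complex.I)) := by
      rw [← Complex.exp_add, ← Complex.exp_add]
      congr 1
      push_cast
      ring
    rw [this]
    push_cast
    ring
  rw [h5, Complex.re_ofReal_mul]
  congr 1
  rw [neg_mul, Complex.neg_re, Complex.I_mul_re, Complex.exp_ofReal_mul_I_im, neg_neg]

end SQ

namespace SQ
open Polynomial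

theorem hh_abs (n K : ℕ) (hn : 0 < n) (θ : ℝ) (h1 : Real.pi / (2 * n) ≤ θ) (h2 : θ ≤ Real.pi / 2) :
    -(2 * 3^n) ≤ hh ((1 - X) * gb n n) K θ := by
  have hpi := Real.pi_pos
  have hn' : (0:ℝ) < n := by exact_mod_cast hn
  have h0 : 0 ≤ θ := le_trans (by positivity) h1
  have hq : ‖qq θ‖ = 1 := by
    rw [qq, show 2 * (θ:ℂ) * Complex.I = ((2 * θ : ℝ) : ℂ) * Complex.I by push_cast; ring,
      Complex.norm_exp_ofReal_mul_I]
  have hs : 1 / (n:ℝ) ≤ Real.sin θ := by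
    refine le_trans ?_ (Real.mul_le_sin h0 h2)
    calc 1 / (n:ℝ) = 2 / Real.pi * (Real.pi / (2 * n)) := by field_simp
      _ ≤ _ := by gcongr
  have hs0 : 0 ≤ Real.sin θ := le_trans (by positivity) hs
  have hq1 : ‖qq θ - 1‖ = 2 * Real.sin θ := by
    have := one_sub_qq_pow θ 1
    rw [norm_sub_rev, ← pow_one (qq θ), this]
    simp only [norm_mul, pow_one, Complex.norm_I, Complex.norm_exp_ofReal_mul_I, norm_neg,
      Nat.cast_one, one_mul, Complex.norm_real, Real.norm_eq_abs, abs_of_nonneg hs0]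
    norm_num
  have hg : ‖gv n n (qq θ)‖ ≤ 3^n := by
    apply gv_upper n _ hq
    rw [hq1]
    rw [div_le_iff₀ hn'] at hs
    linarith
  have h3 : |hh ((1 - X) * gb n n) K θ| ≤ 2 * 3^n := by
    unfold hh
    refine (Complex.abs_re_le_norm _).trans ?_
    rw [norm_mul, eval₂_mul, norm_mul]
    have e1 : ‖Complex.exp (-(2 * K * θ * Complex.I))‖ = 1 := by
      rw [show -(2 * K * (θ:ℂ) * Complex.I) = ((-(2 * K * θ) : ℝ) : ℂ) * Complex.I by push_cast; ring,
        Complex.norm_exp_ofReal_mul_I]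
    have e2 : ‖eval₂ (Int.castRingHom ℂ) (qq θ) (1 - X)‖ ≤ 2 := by
      rw [eval₂_sub, eval₂_one, eval₂_X]
      refine (norm_sub_le _ _).trans ?_
      rw [hq]; norm_num
    rw [e1, mul_one]
    exact mul_le_mul e2 hg (norm_nonneg _) (by norm_num)
  exact (abs_le.1 h3).1

theorem sin_pos_aux (n i : ℕ) (hi : i < n) (θ : ℝ) (h1 : 0 < θ) (h2 : θ ≤ Real.pi / (2 * n)) :
    0 < Real.sin ((i+1:ℕ) * θ) ∧ 0 ≤ Real.sin ((n+i+1:ℕ) * θ) := by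
  have hpi := Real.pi_pos
  have hn' : (0:ℝ) < n := by exact_mod_cast (by omega : 0 < n)
  have hi' : (i:ℝ) + 1 ≤ n := by exact_mod_cast hi
  rw [le_div_iff₀ (by positivity)] at h2
  constructor
  · apply Real.sin_pos_of_pos_of_lt_pi
    · positivity
    · push_cast
      nlinarith
  · apply Real.sin_nonneg_of_nonneg_of_le_pi
    · positivity
    · push_cast
      nlinarith

theorem hh_nonneg (n K : ℕ) (hn : 0 < n) (hK1 : 2 * K ≤ n^2) (hK2 : n^2 + 2 ≤ 2 * K + 2 * n)
    (θ : ℝ) (h1 : 0 < θ) (h2 : θ ≤ Real.pi / (2 * n)) :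
    0 ≤ hh ((1 - X) * gb n n) K θ := by
  have hpi := Real.pi_pos
  have hn' : (1:ℝ) ≤ n := by exact_mod_cast hn
  rw [hh_formula n K θ (fun i hi => (sin_pos_aux n i hi θ h1 h2).1.ne')]
  have hR : 0 ≤ RR n θ := by
    apply Finset.prod_nonneg
    intro i hi
    have := sin_pos_aux n i (Finset.mem_range.1 hi) θ h1 h2
    exact div_nonneg this.2 this.1.le
  have hs := (sin_pos_aux n 0 hn θ h1 h2).1
  simp only [zero_add, Nat.cast_one, one_mul] at hs
  have hK1' : 2 * (K:ℝ) ≤ (n:ℝ)^2 := by exact_mod_cast hK1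
  have hK2' : (n:ℝ)^2 + 2 ≤ 2 * K + 2 * n := by exact_mod_cast hK2
  have hs2 : 0 ≤ Real.sin (((n:ℝ)^2 + 1 - 2 * K) * θ) := by
    rw [le_div_iff₀ (by positivity)] at h2
    apply Real.sin_nonneg_of_nonneg_of_le_pi
    · apply mul_nonneg _ h1.le
      linarith
    · nlinarith
  positivity

theorem binom_prod (n : ℕ) : ∏ i ∈ Finset.range n, (((n+i+1:ℕ):ℝ) / ((i+1:ℕ):ℝ)) = n.centralBinom := by
  rw [Finset.prod_div_distrib, ← Nat.cast_prod, ← Nat.cast_prod, Finset.prod_range_add_one_eq_factorial]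
  have h := Nat.ascFactorial_eq_prod_range (n+1) n
  rw [Nat.ascFactorial_eq_factorial_mul_choose] at h
  have e : ∏ i ∈ Finset.range n, (n + i + 1) = ∏ i ∈ Finset.range n, (n + 1 + i) :=
    Finset.prod_congr rfl (fun i _ => by ring)
  rw [e, ← h, Nat.centralBinom, two_mul]
  have : (n.factorial : ℝ) ≠ 0 := by exact_mod_cast n.factorial_ne_zero
  push_cast
  field_simp

theorem RR_lower (n : ℕ) (hn : 2 ≤ n) (θ : ℝ) (h1 : 0 < θ) (h2 : θ ≤ 1 / (n:ℝ)^2) :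
    (n.centralBinom : ℝ) / 2 ≤ RR n θ := by
  have hpi := Real.pi_gt_three
  have hn' : (2:ℝ) ≤ n := by exact_mod_cast hn
  have hn0 : (0:ℝ) < n := by linarith
  have h2' : θ * (n:ℝ)^2 ≤ 1 := by rwa [le_div_iff₀ (by positivity)] at h2
  have h3 : θ ≤ Real.pi / (2 * n) := by
    rw [le_div_iff₀ (by positivity)]
    nlinarith
  have hnθ : n * θ ≤ 1/2 := by nlinarith
  set c : ℝ := 1 - (n * θ)^2 with hc
  have hc0 : 0 ≤ c := by
    have : 0 ≤ n * θ := by positivity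
    nlinarith
  have hfac : ∀ i ∈ Finset.range n, ((n+i+1:ℕ):ℝ) / ((i+1:ℕ):ℝ) * c ≤
      Real.sin ((n+i+1:ℕ) * θ) / Real.sin ((i+1:ℕ) * θ) := by
    intro i hi
    have hi' : (i:ℝ) + 1 ≤ n := by exact_mod_cast (Finset.mem_range.1 hi)
    have hp := sin_pos_aux n i (Finset.mem_range.1 hi) θ h1 h3
    rw [le_div_iff₀ hp.1]
    set a : ℝ := ((i+1:ℕ):ℝ) with ha
    set b : ℝ := ((n+i+1:ℕ):ℝ) with hb
    have ha0 : 0 < a := by rw [ha]; positivity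
    have hb0 : 0 < b := by rw [hb]; positivity
    have hbn : b ≤ 2 * n := by rw [hb]; push_cast; linarith
    have hs1 : Real.sin (a * θ) ≤ a * θ := (Real.sin_lt (by positivity)).le
    have hs2 := Real.sin_gt_sub_cube (x := b * θ) (by positivity)
    have hb2 : (b * θ)^2 ≤ 4 * (n * θ)^2 := by
      have : b * θ ≤ 2 * (n * θ) := by nlinarith
      have h0 : 0 ≤ b * θ := by positivity
      nlinarith
    calc b / a * c * Real.sin (a * θ) ≤ b / a * c * (a * θ) := by gcongr
      _ = b * θ * c := by field_simp
      _ ≤ b * θ * (1 - (b * θ)^2 / 6) := by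
          apply mul_le_mul_of_nonneg_left _ (by positivity)
          rw [hc]
          nlinarith [sq_nonneg (n * θ)]
      _ = b * θ - (b * θ)^3 / 6 := by ring
      _ ≤ _ := hs2.le
  have hprod := Finset.prod_le_prod (s := Finset.range n) (fun i hi => by positivity) hfac
  rw [Finset.prod_mul_distrib, binom_prod, Finset.prod_const, Finset.card_range] at hprod
  refine le_trans ?_ hprod
  have hber : 1/2 ≤ c^n := by
    have := one_add_mul_le_pow (a := c - 1) (by linarith) n
    rw [show 1 + (c - 1) = c by ring] at this
    refine le_trans ?_ this
    rw [hc]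
    have e : (n:ℝ) * (n * θ)^2 = (θ * n^2) * (n * θ) := by ring
    have : (θ * (n:ℝ)^2) * (n * θ) ≤ 1 * (1/2) := by
      apply mul_le_mul h2' hnθ (by positivity) (by norm_num)
    nlinarith
  have : (0:ℝ) ≤ n.centralBinom := by positivity
  nlinarith

theorem hh_lower (n K : ℕ) (hn : 2 ≤ n) (hK1 : 2 * K ≤ n^2) (hK2 : n^2 + 2 ≤ 2 * K + 2 * n)
    (θ : ℝ) (h1 : 1 / (2 * (n:ℝ)^2) ≤ θ) (h2 : θ ≤ 1 / (n:ℝ)^2) :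
    (n.centralBinom : ℝ) * (1 / (Real.pi * (n:ℝ)^2))^2 ≤ hh ((1 - X) * gb n n) K θ := by
  have hpi := Real.pi_gt_three
  have hn' : (2:ℝ) ≤ n := by exact_mod_cast hn
  have hn0 : (0:ℝ) < n := by linarith
  have h0 : 0 < θ := lt_of_lt_of_le (by positivity) h1
  have h2' : θ * (n:ℝ)^2 ≤ 1 := by rwa [le_div_iff₀ (by positivity)] at h2
  have h3 : θ ≤ Real.pi / (2 * n) := by
    rw [le_div_iff₀ (by positivity)]
    nlinarith
  have hR := RR_lower n hn θ h0 h2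
  rw [hh_formula n K θ (fun i hi => (sin_pos_aux n i hi θ h0 h3).1.ne')]
  have hK1' : 2 * (K:ℝ) ≤ (n:ℝ)^2 := by exact_mod_cast hK1
  have hK2' : (n:ℝ)^2 + 2 ≤ 2 * K + 2 * n := by exact_mod_cast hK2
  have hnθ : n * θ ≤ 1/2 := by nlinarith
  have hle : ((n:ℝ)^2 + 1 - 2 * K) * θ ≤ Real.pi / 2 := by
    have : ((n:ℝ)^2 + 1 - 2 * K) * θ ≤ (2 * n) * θ := by gcongr; linarith
    nlinarith
  have hge : θ ≤ ((n:ℝ)^2 + 1 - 2 * K) * θ := by nlinarith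
  have hs0 : 1 / (Real.pi * (n:ℝ)^2) ≤ Real.sin θ := by
    refine le_trans ?_ (Real.mul_le_sin h0.le (hge.trans hle))
    calc 1 / (Real.pi * (n:ℝ)^2) = 2 / Real.pi * (1 / (2 * (n:ℝ)^2)) := by field_simp
      _ ≤ _ := by gcongr
  have hs1 : Real.sin θ ≤ Real.sin (((n:ℝ)^2 + 1 - 2 * K) * θ) :=
    Real.sin_le_sin_of_le_of_le_pi_div_two (by linarith) hle hge
  have hp : 0 < 1 / (Real.pi * (n:ℝ)^2) := by positivity
  calc (n.centralBinom : ℝ) * (1 / (Real.pi * (n:ℝ)^2))^2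
      = 2 * ((n.centralBinom : ℝ)/2) * (1 / (Real.pi * (n:ℝ)^2)) * (1 / (Real.pi * (n:ℝ)^2)) := by ring
    _ ≤ 2 * RR n θ * Real.sin θ * Real.sin (((n:ℝ)^2 + 1 - 2 * K) * θ) := by
      have hc : (0:ℝ) ≤ n.centralBinom := by positivity
      have hRR : 0 ≤ RR n θ := le_trans (by positivity) hR
      have hsp : 0 ≤ Real.sin θ := hp.le.trans hs0
      gcongr
      exact hs0.trans hs1

theorem dl_lower (n k : ℕ) (hn : 2 ≤ n) (hK1 : 2 * (k+1) ≤ n^2) (hK2 : n^2 + 2 ≤ 2 * (k+1) + 2 * n) :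
    (n.centralBinom : ℝ) / (32 * (n:ℝ)^6) - 2 * 3^n ≤ dl n n k := by
  have hpi := Real.pi_gt_three
  have hpi2 := Real.pi_lt_d2
  have hn' : (2:ℝ) ≤ n := by exact_mod_cast hn
  have hn0 : (0:ℝ) < n := by linarith
  set f := hh ((1 - X) * gb n n) (k+1) with hf
  have hint : ∀ a b : ℝ, IntervalIntegrable f MeasureTheory.volume a b :=
    fun a b => (hh_cont _ _).intervalIntegrable a b
  have hco : ((1 - X) * gb n n).coeff (k+1) = dl n n k := by
    rw [sub_mul, one_mul, coeff_sub, coeff_X_mul, dl]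
  have htot := int_hh ((1 - X) * gb n n) (k+1)
  rw [hco] at htot
  set a1 : ℝ := 1 / (2 * (n:ℝ)^2) with ha1
  set a2 : ℝ := 1 / (n:ℝ)^2 with ha2
  set a3 : ℝ := Real.pi / (2 * n) with ha3
  have h01 : 0 < a1 := by positivity
  have e12 : a2 - a1 = a1 := by rw [ha1, ha2]; field_simp; ring
  have h12 : a1 ≤ a2 := by linarith
  have h23 : a2 ≤ a3 := by
    rw [ha2, ha3, div_le_div_iff₀ (by positivity) (by positivity)]
    nlinarith
  have h34 : a3 ≤ Real.pi / 2 := by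
    rw [ha3]
    apply div_le_div_of_nonneg_left (by linarith) (by norm_num) (by linarith)
  have i1 : 0 ≤ ∫ θ in (0:ℝ)..a1, f θ := by
    have := intervalIntegral.integral_mono_on_of_le_Ioo (f := fun _ => (0:ℝ)) (g := f) h01.le
      (by simp) (hint 0 a1) (fun x hx => hh_nonneg n (k+1) (by omega) hK1 hK2 x hx.1 (by linarith [hx.2]))
    simpa using this
  have i2 : a1 * ((n.centralBinom : ℝ) * (1 / (Real.pi * (n:ℝ)^2))^2) ≤ ∫ θ in a1..a2, f θ := by
    have := intervalIntegral.integral_mono_on_of_le_Ioo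
      (f := fun _ => (n.centralBinom : ℝ) * (1 / (Real.pi * (n:ℝ)^2))^2) (g := f) h12
      (by simp) (hint a1 a2) (fun x hx => hh_lower n (k+1) hn hK1 hK2 x hx.1.le hx.2.le)
    rw [intervalIntegral.integral_const, e12] at this
    simpa using this
  have i3 : 0 ≤ ∫ θ in a2..a3, f θ := by
    have := intervalIntegral.integral_mono_on_of_le_Ioo (f := fun _ => (0:ℝ)) (g := f) h23
      (by simp) (hint a2 a3) (fun x hx => hh_nonneg n (k+1) (by omega) hK1 hK2 x (by linarith [hx.1]) hx.2.le)
    simpa using this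
  have i4 : (Real.pi/2) * -(2 * 3^n) ≤ ∫ θ in a3..(Real.pi/2), f θ := by
    have := intervalIntegral.integral_mono_on_of_le_Ioo
      (f := fun _ => -(2 * 3^n : ℝ)) (g := f) h34
      (by simp) (hint a3 _) (fun x hx => hh_abs n (k+1) (by omega) x hx.1.le hx.2.le)
    rw [intervalIntegral.integral_const] at this
    refine le_trans ?_ this
    rw [smul_eq_mul]
    have h3 : (0:ℝ) < 3^n := by positivity
    nlinarith
  have hsplit : ∫ θ in (0:ℝ)..(Real.pi/2), f θ = (∫ θ in (0:ℝ)..a1, f θ) + (∫ θ in a1..a2, f θ) +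
      (∫ θ in a2..a3, f θ) + ∫ θ in a3..(Real.pi/2), f θ := by
    rw [intervalIntegral.integral_add_adjacent_intervals (hint _ _) (hint _ _),
      intervalIntegral.integral_add_adjacent_intervals (hint _ _) (hint _ _),
      intervalIntegral.integral_add_adjacent_intervals (hint _ _) (hint _ _)]
  rw [hsplit] at htot
  have key : a1 * ((n.centralBinom : ℝ) * (1 / (Real.pi * (n:ℝ)^2))^2) + (Real.pi/2) * -(2 * 3^n) ≤
    Real.pi / 2 * dl n n k := by linarith
  have e : a1 * ((n.centralBinom : ℝ) * (1 / (Real.pi * (n:ℝ)^2))^2) =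
      Real.pi / 2 * ((n.centralBinom : ℝ) / (Real.pi^3 * (n:ℝ)^6)) := by
    rw [ha1]; field_simp
  rw [e, ← mul_add] at key
  have key2 := le_of_mul_le_mul_left key (by positivity)
  have hpi3 : Real.pi^3 ≤ 32 := by
    have h : Real.pi^3 ≤ 3.15^3 := by gcongr
    norm_num at h ⊢
    linarith
  have : (n.centralBinom : ℝ) / (32 * (n:ℝ)^6) ≤ (n.centralBinom : ℝ) / (Real.pi^3 * (n:ℝ)^6) := by
    gcongr
  linarith

theorem growth (n : ℕ) (hn : 140 ≤ n) : 192 * n^7 * 3^n ≤ 4^n := by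
  induction n, hn using Nat.le_induction with
  | base => norm_num
  | succ n hn ih =>
    have h : 3 * (n+1)^7 ≤ 4 * n^7 := by
      have h1 : 141 * n ≥ 140 * (n+1) := by omega
      have h2 : (140 * (n+1))^7 ≤ (141 * n)^7 := Nat.pow_le_pow_left h1 7
      rw [mul_pow, mul_pow] at h2
      norm_num at h2
      omega
    calc 192 * (n+1)^7 * 3^(n+1) = 192 * (3 * (n+1)^7) * 3^n := by ring
      _ ≤ 192 * (4 * n^7) * 3^n := by gcongr
      _ = 4 * (192 * n^7 * 3^n) := by ring
      _ ≤ 4 * 4^n := by gcongr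
      _ = _ := by ring

theorem dl_large (n k : ℕ) (hn : 140 ≤ n) (hK1 : 2 * (k+1) ≤ n^2) (hK2 : n^2 + 2 ≤ 2 * (k+1) + 2 * n) :
    (2:ℤ)^n ≤ dl n n k := by
  have h1 := dl_lower n k (by omega) hK1 hK2
  have h2 := Nat.four_pow_le_two_mul_self_mul_centralBinom n (by omega)
  have h3 := growth n hn
  have h2' : (4:ℝ)^n ≤ 2 * n * n.centralBinom := by exact_mod_cast h2
  have h3' : 192 * (n:ℝ)^7 * 3^n ≤ 4^n := by exact_mod_cast h3
  have hn0 : (0:ℝ) < n := by exact_mod_cast (by omega : 0 < n)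
  have h4 : 3 * (3:ℝ)^n ≤ (n.centralBinom : ℝ) / (32 * (n:ℝ)^6) := by
    rw [le_div_iff₀ (by positivity)]
    have : (2 * (n:ℝ)) * (3 * 3^n * (32 * n^6)) ≤ (2 * n) * n.centralBinom := by
      calc (2 * (n:ℝ)) * (3 * 3^n * (32 * n^6)) = 192 * (n:ℝ)^7 * 3^n := by ring
        _ ≤ _ := h3'.trans h2'
    exact le_of_mul_le_mul_left this (by positivity)
  have h5 : (2:ℝ)^n ≤ 3^n := by gcongr; norm_num
  have : (2:ℝ)^n ≤ dl n n k := by linarith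
  exact_mod_cast this

end SQ

namespace SQ
open Polynomial

/-- digit extraction -/
theorem digit (x : ℤ) (k : ℕ) (P : ℤ[X]) (h0 : ∀ i, 0 ≤ P.coeff i)
    (h1 : ∀ i, P.coeff i < x) : P.eval x / x^k % x = P.coeff k := by
  have hx : 0 < x := (h0 0).trans_lt (h1 0)
  have e : P.eval x = x * (divX P).eval x + P.coeff 0 := by
    conv_lhs => rw [← divX_mul_X_add P]
    simp [mul_comm]
  induction k generalizing P with
  | zero =>
    rw [pow_zero, Int.ediv_one, e, Int.mul_add_emod_self_left]
    exact Int.emod_eq_of_lt (h0 0) (h1 0)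
  | succ k ih =>
    have : P.eval x / x = (divX P).eval x := by
      rw [e, Int.mul_add_ediv_left _ _ hx.ne', Int.ediv_eq_zero_of_lt (h0 0) (h1 0), add_zero]
    rw [pow_succ', ← Int.ediv_ediv_of_nonneg hx.le, this, ih, coeff_divX]
    · intro i; rw [coeff_divX]; exact h0 _
    · intro i; rw [coeff_divX]; exact h1 _
    · conv_lhs => rw [← divX_mul_X_add (divX P)]
      simp [mul_comm]

theorem gb_nonneg (l m k : ℕ) : 0 ≤ (gb l m).coeff k := by rw [gb_coeff]; positivity

theorem gb_lt (l m k : ℕ) : (gb l m).coeff k ≤ 2^(l+m) := by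
  induction l generalizing m k with
  | zero =>
    rw [gb_zero_left, coeff_one]
    split_ifs
    · exact one_le_pow₀ (by norm_num)
    · positivity
  | succ l ihl =>
    induction m generalizing k with
    | zero =>
      rw [gb_zero_right, coeff_one]
      split_ifs
      · exact one_le_pow₀ (by norm_num)
      · positivity
    | succ m ihm =>
      rw [gb_rec, coeff_add, coeff_X_pow_mul']
      have h1 := ihm k
      have h2 := ihl (m+1) (k-(m+1))
      have e1 : (2:ℤ)^(l+1+(m+1)) = 2^(l+1+m) + 2^(l+(m+1)) := by ring
      rw [e1]
      split_ifs
      · linarith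
      · have : (0:ℤ) ≤ 2^(l+(m+1)) := by positivity
        linarith

/-- packing base -/
def bX : ℕ := 2^280

theorem key2 (m : ℕ) : gb (m+1) (m+1) * ((1 - X^(m+1))^2) =
    gb m m * (1 - X^(2*m+1)) * (1 - X^(2*m+2)) := by
  have key : ∀ l m, gb l m * (∏ i ∈ Finset.range m, (1 - (X:ℤ[X])^(i+1))) *
      (∏ i ∈ Finset.range l, (1 - (X:ℤ[X])^(i+1))) =
      ∏ i ∈ Finset.range (l+m), (1 - (X:ℤ[X])^(i+1)) := by
    intro l m
    rw [gb_prod, Finset.prod_range_add, mul_comm]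
  have h1 := key m m
  have h2 := key (m+1) (m+1)
  rw [show m+1+(m+1) = m+m+1+1 by ring, Finset.prod_range_succ _ (m+m+1),
    Finset.prod_range_succ _ (m+m), ← h1, Finset.prod_range_succ] at h2
  have hm := prod_ne_zero m
  apply mul_right_cancel₀ hm
  apply mul_right_cancel₀ hm
  rw [show 2*m+1 = m+m+1 by ring, show 2*m+2 = m+m+1+1 by ring]
  linear_combination h2

/-- passing from `m` to `m+1` -/
def stp (m N : ℕ) : ℕ := N * (bX^(2*m+1) - 1) * (bX^(2*m+2) - 1) / (bX^(m+1) - 1)^2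

theorem bX_one (m : ℕ) : 1 < bX^(m+1) := Nat.one_lt_pow (by omega) (by unfold bX; norm_num)

theorem stp_spec (m N : ℕ) (h : (N:ℤ) = (gb m m).eval (bX:ℤ)) :
    ((stp m N : ℕ) : ℤ) = (gb (m+1) (m+1)).eval (bX:ℤ) := by
  have hk := congrArg (Polynomial.eval (bX:ℤ)) (key2 m)
  simp only [eval_mul, eval_pow, eval_sub, eval_one, eval_X] at hk
  have a1 := bX_one m
  have a2 := bX_one (2*m)
  have a3 := bX_one (2*m+1)
  rw [← h] at hk
  unfold stp
  rw [show 2*m+2 = 2*m+1+1 by ring] at hk ⊢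
  push_cast [Nat.cast_sub a1.le, Nat.cast_sub a2.le, Nat.cast_sub a3.le]
  have a1' : (1:ℤ) < (bX:ℤ)^(m+1) := by exact_mod_cast a1
  apply Int.ediv_eq_of_eq_mul_left
  · have : (0:ℤ) < ((bX:ℤ)^(m+1) - 1) := by linarith
    positivity
  · linear_combination -hk

/-- forcing evaluation -/
def frc {α : Type} (n : ℕ) (f : ℕ → α) : α := Nat.rec (f 0) (fun m _ => f (m+1)) n

theorem frc_eq {α : Type} (n : ℕ) (f : ℕ → α) : frc n f = f n := by cases n <;> rfl

/-- digit check loop -/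
def go (e : ℕ) : ℕ → ℕ → ℕ → Bool
  | 0, _, _ => true
  | f+1, W, K => frc (W / bX) fun W' =>
    Nat.ble (2^e + 5*(2*K)^2 * (W % bX)) (5*(2*K)^2 * (W' % bX)) && go e f W' (K+1)

theorem go_spec (e f W K : ℕ) (h : go e f W K = true) (j : ℕ) (hj : j < f) :
    2^e + 5*(2*(K+j))^2 * (W / bX^j % bX) ≤ 5*(2*(K+j))^2 * (W / bX^(j+1) % bX) := by
  induction f generalizing W K j with
  | zero => omega
  | succ f ih =>
    rw [go, frc_eq, Bool.and_eq_true, Nat.ble_eq] at h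
    rcases j with _ | j
    · simpa using h.1
    · have := ih _ _ h.2 j (by omega)
      rw [Nat.div_div_eq_div_mul, Nat.div_div_eq_div_mul, ← pow_succ', ← pow_succ'] at this
      rwa [show K + (j+1) = K+1+j by ring]

/-- check one `m`, for `K` in `[lo, lo+f)` -/
def cw (e f lo N : ℕ) : Bool := frc (N / bX^(lo-1)) fun W => go e f W lo

theorem cw_spec (e f lo N m : ℕ) (h : cw e f lo N = true) (hm : 2*m < 280)
    (hN : (N:ℤ) = (gb m m).eval (bX:ℤ)) (k : ℕ) (h1 : lo ≤ k+1) (h1' : 1 ≤ lo) (h2 : k + 1 < lo + f) :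
    (2:ℤ)^e ≤ 5 * (2*((k:ℤ)+1))^2 * dl m m k := by
  rw [cw, frc_eq] at h
  have := go_spec _ _ _ _ h (k+1-lo) (by omega)
  rw [Nat.div_div_eq_div_mul, Nat.div_div_eq_div_mul, ← pow_add, ← pow_add,
    show lo - 1 + (k+1-lo) = k by omega, show lo - 1 + (k+1-lo+1) = k+1 by omega,
    show lo + (k+1-lo) = k+1 by omega] at this
  have hd : ∀ i, (gb m m).coeff i < (bX:ℤ) := by
    intro i
    refine (gb_lt m m i).trans_lt ?_
    unfold bX
    push_cast
    exact pow_lt_pow_right₀ (by norm_num) (by omega)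
  have d1 := digit (bX:ℤ) k (gb m m) (gb_nonneg m m) hd
  have d2 := digit (bX:ℤ) (k+1) (gb m m) (gb_nonneg m m) hd
  rw [← hN] at d1 d2
  unfold dl
  rw [← d1, ← d2]
  zify at this
  linarith

/-- check one `m` -/
def ck (m N : ℕ) : Bool :=
  match Nat.ble 9 m with
  | true => cw m (m^2/2 - (m-1)^2/2) ((m-1)^2/2 + 1) N
  | false => match Nat.beq 8 m with
    | true => cw 8 29 4 N && cw 3 2 2 N
    | false => true

/-- main loop -/
def run : ℕ → ℕ → ℕ → Bool
  | 0, _, _ => true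
  | f+1, m, N => frc N fun N' => ck m N' && run f (m+1) (stp m N')

theorem run_spec (f m N : ℕ) (h : run f m N = true) (hN : (N:ℤ) = (gb m m).eval (bX:ℤ))
    (j : ℕ) (h1 : m ≤ j) (h2 : j < m + f) :
    ∃ N' : ℕ, (N':ℤ) = (gb j j).eval (bX:ℤ) ∧ ck j N' = true := by
  induction f generalizing m N with
  | zero => omega
  | succ f ih =>
    rw [run, frc_eq, Bool.and_eq_true] at h
    rcases eq_or_lt_of_le h1 with rfl | h1
    · exact ⟨N, hN, h.1⟩
    · exact ih (m+1) _ h.2 (stp_spec m N hN) h1 (by omega)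

end SQ

namespace SQ
theorem run_ok : run 140 0 1 = true := by decide +kernel
end SQ

namespace SQ
open Polynomial

theorem comp (m k : ℕ) (h9 : 9 ≤ m) (hm : m < 140) (h1 : (m-1)^2 < 2*(k+1)) (h2 : 2*(k+1) ≤ m^2) :
    (2:ℤ)^m ≤ 5 * (2*((k:ℤ)+1))^2 * dl m m k := by
  obtain ⟨N, hN, hc⟩ := run_spec _ _ _ run_ok (by simp [gb_zero_left]) m (by omega) (by omega)
  have : Nat.ble 9 m = true := by rw [Nat.ble_eq]; exact h9
  rw [ck, this] at hc
  exact cw_spec _ _ _ _ _ hc (by omega) hN k (by omega) (by omega) (by omega)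

theorem comp8 (k : ℕ) (h1 : 4 ≤ k+1) (h2 : k+1 ≤ 32) :
    (2:ℤ)^8 ≤ 5 * (2*((k:ℤ)+1))^2 * dl 8 8 k := by
  obtain ⟨N, hN, hc⟩ := run_spec _ _ _ run_ok (by simp [gb_zero_left]) 8 (by omega) (by omega)
  change (cw 8 29 4 N && cw 3 2 2 N) = true at hc
  rw [Bool.and_eq_true] at hc
  exact cw_spec _ _ _ _ _ hc.1 (by omega) hN k (by omega) (by omega) (by omega)

theorem comp3 (k : ℕ) (h1 : 2 ≤ k+1) (h2 : k+1 ≤ 3) :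
    (2:ℤ)^3 ≤ 5 * (2*((k:ℤ)+1))^2 * dl 8 8 k := by
  obtain ⟨N, hN, hc⟩ := run_spec _ _ _ run_ok (by simp [gb_zero_left]) 8 (by omega) (by omega)
  change (cw 8 29 4 N && cw 3 2 2 N) = true at hc
  rw [Bool.and_eq_true] at hc
  exact cw_spec _ _ _ _ _ hc.2 (by omega) hN k (by omega) (by omega) (by omega)

theorem main_int (n k : ℕ) (hn : 8 ≤ n) (hk1 : 1 ≤ k) (hk2 : 2 * (k+1) ≤ n^2) :
    ∃ s : ℕ, 2*(k+1) ≤ s^2 ∧ (2:ℤ)^s ≤ 5 * (2*((k:ℤ)+1))^2 * dl n n k := by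
  have mono : ∀ m s, m ≤ n → 2*(k+1) ≤ m*m → (2:ℤ)^s ≤ 5 * (2*((k:ℤ)+1))^2 * dl m m k →
      (2:ℤ)^s ≤ 5 * (2*((k:ℤ)+1))^2 * dl n n k := by
    intro m s h1 h2 h3
    refine h3.trans ?_
    have := dl_mono m n k h1 h2
    gcongr
  by_cases h32 : k + 1 ≤ 32
  · by_cases h3 : k + 1 ≤ 3
    · exact ⟨3, by omega, mono 8 3 hn (by omega) (comp3 k (by omega) h3)⟩
    · exact ⟨8, by omega, mono 8 8 hn (by omega) (comp8 k (by omega) h32)⟩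
  · have hex : ∃ m, 2*(k+1) ≤ m^2 := ⟨n, hk2⟩
    classical
    set m := Nat.find hex with hmdef
    have hm1 : 2*(k+1) ≤ m^2 := Nat.find_spec hex
    have hmn : m ≤ n := Nat.find_min' hex hk2
    have h9 : 9 ≤ m := by
      by_contra hlt
      have : m ≤ 8 := by omega
      have : m^2 ≤ 8^2 := Nat.pow_le_pow_left this 2
      omega
    have hm2 : (m-1)^2 < 2*(k+1) := by
      have := Nat.find_min hex (m := m-1) (by omega)
      omega
    refine ⟨m, hm1, mono m m hmn (by nlinarith) ?_⟩
    by_cases h140 : m < 140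
    · exact comp m k h9 h140 hm2 hm1
    · have := dl_large m k (by omega) hm1 (by
        obtain ⟨p, hp⟩ : ∃ p, m = p+1 := ⟨m-1, by omega⟩
        rw [hp] at hm2 ⊢
        rw [Nat.add_sub_cancel] at hm2
        nlinarith)
      have hp : (0:ℤ) < 2^m := by positivity
      nlinarith [sq_nonneg (k:ℤ)]

theorem const_le : Real.sqrt (27/8) / Real.pi^2 ≤ 1/5 := by
  have h1 : Real.sqrt (27/8) ≤ 1.84 := by
    rw [Real.sqrt_le_left (by norm_num)]; norm_num
  have h2 := Real.pi_gt_d2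
  rw [div_le_div_iff₀ (by positivity) (by norm_num)]
  nlinarith

end SQ

/-- For `n ≥ 8` and `2 ≤ k` with `2k ≤ n²`, one has
`p_k(n,n) − p_{k−1}(n,n) ≥ C · 2^{√(2k)} / (2k)^{9/4}` where `C = √(27/8)/π²`. -/
theorem square_qbinomial_lower_bound (n k : ℕ) (hn : 8 ≤ n) (hk1 : 2 ≤ k)
    (hk2 : 2 * k ≤ n ^ 2) :
    ((rectPartitions k n n : ℝ) - (rectPartitions (k - 1) n n : ℝ)) ≥
      (Real.sqrt (27 / 8) / Real.pi ^ 2) *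
        (2 : ℝ) ^ Real.sqrt (2 * (k : ℝ)) / (2 * (k : ℝ)) ^ ((9 : ℝ) / 4) := by
  obtain ⟨k, rfl⟩ : ∃ k', k = k' + 1 := ⟨k-1, by omega⟩
  rw [Nat.add_sub_cancel]
  obtain ⟨s, hs1, hs2⟩ := SQ.main_int n k hn (by omega) hk2
  have hd : ((rectPartitions (k+1) n n : ℝ) - (rectPartitions k n n : ℝ)) = ((SQ.dl n n k : ℤ) : ℝ) := by
    rw [SQ.dl, ← SQ.rect_coeff, ← SQ.rect_coeff]
    push_cast
    ring
  rw [hd]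
  have hs2' : (2:ℝ)^s ≤ 5 * (2*((k:ℝ)+1))^2 * ((SQ.dl n n k : ℤ) : ℝ) := by exact_mod_cast hs2
  push_cast
  have hx : (1:ℝ) ≤ 2*((k:ℝ)+1) := by
    have : (0:ℝ) ≤ k := by positivity
    linarith
  generalize hX : 2*((k:ℝ)+1) = x at *
  have hxs : x ≤ (s:ℝ)^2 := by rw [← hX]; exact_mod_cast hs1
  have e1 : (2:ℝ) ^ Real.sqrt x ≤ 2^s := by
    rw [← Real.rpow_natCast]
    apply Real.rpow_le_rpow_of_exponent_le (by norm_num)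
    exact Real.sqrt_le_iff.2 ⟨by positivity, hxs⟩
  have e2 : x^2 ≤ x ^ ((9:ℝ)/4) := by
    rw [← Real.rpow_natCast]
    apply Real.rpow_le_rpow_of_exponent_le hx
    norm_num
  have hx2 : 0 < x^2 := by positivity
  calc (Real.sqrt (27 / 8) / Real.pi ^ 2) * (2 : ℝ) ^ Real.sqrt x / x ^ ((9 : ℝ) / 4)
      ≤ (1/5) * 2^s / x^2 := by
        have := SQ.const_le
        gcongr
    _ ≤ _ := by
        rw [div_le_iff₀ hx2]
        linarith
end
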